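/- arXiv:math/0212105 — 13 statements merged into one kernel-verified Lean document; each statement's English description precedes it below -/
import Mathlib

section
/- Let γ > 0 and δ ∈ ℝ. Then: (i) the improper integral ∫₀¹ e^{i x^{-γ}} x^{δ} dx exists, i.e. the limit of ∫_ε¹ e^{i x^{-γ}} x^{δ} dx as ε → 0⁺ exists in ℂ, if and only if γ + δ + 1 > 0; and (ii) the function x ↦ e^{i x^{-γ}} x^{δ} is Lebesgue integrable on (0,1) if and only if δ > -1. -/
open MeasureTheory Filter

lemma aux_abel (g I : ℝ → ℂ) (hg : ContinuousOn g (Set.Ioi 0))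
    (hI : ∀ x : ℝ, 0 < x → HasDerivAt I (-g x) x) (C : ℝ)
    (hC : ∀ x ∈ Set.Ioc (0:ℝ) 1, ‖I x‖ ≤ C) (p : ℝ) (hp : 0 < p) :
    ∃ L : ℂ, Tendsto (fun ε : ℝ => ∫ x in ε..1, g x * ((x ^ p : ℝ) : ℂ))
      (nhdsWithin 0 (Set.Ioi 0)) (nhds L) := by
  have hIc : ContinuousOn I (Set.Ioi 0) := fun x hx => (hI x hx).continuousAt.continuousWithinAt
  have hpow : ∀ q : ℝ, ContinuousOn (fun x : ℝ => ((x ^ q : ℝ) : ℂ)) (Set.Ioi 0) := fun q =>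
    Complex.continuous_ofReal.comp_continuousOn
      (continuousOn_id.rpow_const (fun x hx => Or.inl (ne_of_gt hx)))
  set h : ℝ → ℂ := fun x => ((p * x ^ (p - 1) : ℝ) : ℂ) * I x with hh
  have hint : IntegrableOn h (Set.Ioc 0 1) := by
    have h1 : IntegrableOn (fun x : ℝ => C * (p * x ^ (p - 1))) (Set.Ioc 0 1) := by
      have := intervalIntegral.intervalIntegrable_rpow' (a := 0) (b := 1) (r := p - 1) (by linarith)
      rw [intervalIntegrable_iff_integrableOn_Ioc_of_le zero_le_one] at this
      exact (this.const_mul p).const_mul C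
    refine Integrable.mono' h1 ?_ ?_
    · refine ContinuousOn.aestronglyMeasurable ?_ measurableSet_Ioc
      have : ContinuousOn h (Set.Ioi 0) := by
        simp only [hh, Complex.ofReal_mul]
        exact (continuousOn_const.mul (hpow _)).mul hIc
      exact this.mono (fun x hx => hx.1)
    · refine ae_restrict_of_forall_mem measurableSet_Ioc fun x hx => ?_
      have h0 : 0 ≤ p * x ^ (p - 1) := mul_nonneg hp.le (Real.rpow_nonneg hx.1.le _)
      simp only [hh, norm_mul, Complex.norm_real, Real.norm_eq_abs]
      rw [← abs_mul, abs_of_nonneg h0, mul_comm]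
      exact mul_le_mul_of_nonneg_right (hC x hx) h0
  have key : ∀ ε ∈ Set.Ioc (0:ℝ) 1, (∫ x in ε..1, g x * ((x ^ p : ℝ) : ℂ))
      = ((ε ^ p : ℝ) : ℂ) * I ε - I 1 + ∫ x in ε..1, h x := by
    intro ε hε
    have hsub : Set.uIcc ε 1 ⊆ Set.Ioi 0 := by
      rw [Set.uIcc_of_le hε.2]; exact fun x hx => lt_of_lt_of_le hε.1 hx.1
    have := intervalIntegral.integral_mul_deriv_eq_deriv_mul (a := ε) (b := 1)
      (u := fun x : ℝ => ((x ^ p : ℝ) : ℂ)) (u' := fun x => ((p * x ^ (p - 1) : ℝ) : ℂ))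
      (v := I) (v' := fun x => - g x)
      (fun x hx => (Real.hasDerivAt_rpow_const (Or.inl (ne_of_gt (hsub hx)))).ofReal_comp)
      (fun x hx => hI x (hsub hx))
      (by
        apply ContinuousOn.intervalIntegrable
        simp only [Complex.ofReal_mul]
        exact (continuousOn_const.mul (hpow _)).mono hsub)
      ((hg.mono hsub).neg.intervalIntegrable)
    simp only [mul_neg, intervalIntegral.integral_neg, Real.one_rpow, Complex.ofReal_one,
      one_mul] at this
    have e : (∫ x in ε..1, g x * ((x ^ p : ℝ) : ℂ)) = ∫ x in ε..1, ((x ^ p : ℝ) : ℂ) * g x := by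
      congr 1; ext x; ring
    rw [e]
    linear_combination -this
  have t1 : Tendsto (fun ε : ℝ => ((ε ^ p : ℝ) : ℂ) * I ε) (nhdsWithin 0 (Set.Ioi 0)) (nhds 0) := by
    have hz : Tendsto (fun ε : ℝ => ε ^ p * C) (nhdsWithin 0 (Set.Ioi 0)) (nhds 0) := by
      have := (Real.continuousAt_rpow_const 0 p (Or.inr hp.le)).tendsto
      rw [Real.zero_rpow hp.ne'] at this
      simpa using (this.mono_left nhdsWithin_le_nhds).mul_const C
    refine squeeze_zero_norm' ?_ hz
    filter_upwards [Ioc_mem_nhdsGT (zero_lt_one (α := ℝ))] with x hx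
    rw [norm_mul, Complex.norm_real, Real.norm_of_nonneg (Real.rpow_nonneg hx.1.le _)]
    exact mul_le_mul_of_nonneg_left (hC x hx) (Real.rpow_nonneg hx.1.le _)
  have t2 : Tendsto (fun ε : ℝ => ∫ x in ε..1, h x) (nhdsWithin 0 (Set.Ioi 0))
      (nhds (∫ x in (0:ℝ)..1, h x)) := by
    have hc := intervalIntegral.continuousOn_primitive_interval_left (f := h) (a := 0) (b := 1)
      (μ := volume) (by
        rw [Set.uIcc_of_le zero_le_one, integrableOn_Icc_iff_integrableOn_Ioc]; exact hint)
    have := hc 0 (by simp)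
    rw [Set.uIcc_of_le zero_le_one] at this
    exact this.tendsto.mono_left (nhdsWithin_le_of_mem
      (mem_of_superset (Ioc_mem_nhdsGT (zero_lt_one (α := ℝ))) Set.Ioc_subset_Icc_self))
  refine ⟨_, ((t1.sub_const (I 1)).add t2).congr' ?_⟩
  filter_upwards [Ioc_mem_nhdsGT (zero_lt_one (α := ℝ))] with x hx
  exact (key x hx).symm

lemma aux_osc (γ : ℝ) (hγ : 0 < γ) (M : ℂ)
    (h : Tendsto (fun x : ℝ => Complex.exp (Complex.I * ((x ^ (-γ) : ℝ) : ℂ)))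
      (nhdsWithin 0 (Set.Ioi 0)) (nhds M)) : False := by
  have hs : Tendsto (fun t : ℝ => t ^ (-(1/γ))) atTop (nhdsWithin 0 (Set.Ioi 0)) := by
    refine tendsto_nhdsWithin_iff.2 ⟨tendsto_rpow_neg_atTop (by positivity), ?_⟩
    filter_upwards [eventually_gt_atTop 0] with t ht
    exact Real.rpow_pos_of_pos ht _
  have h1 : Tendsto (fun t : ℝ => Complex.exp (Complex.I * (t : ℂ))) atTop (nhds M) := by
    refine (h.comp hs).congr' ?_
    filter_upwards [eventually_gt_atTop 0] with t ht
    simp only [Function.comp]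
    rw [← Real.rpow_mul ht.le]
    have : -(1/γ) * -γ = 1 := by field_simp
    rw [this, Real.rpow_one]
  have h2 := h1.comp (tendsto_atTop_add_const_right atTop Real.pi tendsto_id)
  have h3 : Tendsto (fun t : ℝ => Complex.exp (Complex.I * (t : ℂ))) atTop (nhds (-M)) := by
    refine h2.neg.congr fun t => ?_
    simp only [Function.comp, id, Complex.ofReal_add, mul_add, Complex.exp_add]
    rw [mul_comm Complex.I (Real.pi : ℂ), Complex.exp_pi_mul_I]; ring
  have h4 : M = -M := tendsto_nhds_unique h1 h3
  have h5 : M = 0 := by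
    have : 2 * M = 0 := by linear_combination h4
    simpa using this
  have h6 : ‖M‖ = 1 := by
    refine tendsto_nhds_unique h1.norm ?_
    simp [mul_comm Complex.I, Complex.norm_exp_ofReal_mul_I]
  simp [h5] at h6

/-- Lemma 1(a): for `γ > 0` and `δ ∈ ℝ`, the improper integral
`∫₀¹ e^{i x^{-γ}} x^{δ} dx` exists iff `γ + δ + 1 > 0`, and the integrand is
Lebesgue integrable on `(0,1)` iff `δ > -1`. -/
theorem stmt0 (γ δ : ℝ) (hγ : 0 < γ) :
    ((∃ L : ℂ, Tendsto
        (fun ε : ℝ => ∫ x in ε..1,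
          Complex.exp (Complex.I * ((x ^ (-γ) : ℝ) : ℂ)) * ((x ^ δ : ℝ) : ℂ))
        (nhdsWithin 0 (Set.Ioi 0)) (nhds L)) ↔ γ + δ + 1 > 0) ∧
    (IntegrableOn
        (fun x : ℝ => Complex.exp (Complex.I * ((x ^ (-γ) : ℝ) : ℂ)) * ((x ^ δ : ℝ) : ℂ))
        (Set.Ioo 0 1) ↔ δ > -1) := by
  have hpow : ∀ q : ℝ, ContinuousOn (fun x : ℝ => ((x ^ q : ℝ) : ℂ)) (Set.Ioi 0) := fun q =>
    Complex.continuous_ofReal.comp_continuousOn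
      (continuousOn_id.rpow_const (fun x hx => Or.inl (ne_of_gt hx)))
  set F : ℝ → ℂ := fun x => Complex.exp (Complex.I * ((x ^ (-γ) : ℝ) : ℂ)) with hF
  have hFn : ∀ x, ‖F x‖ = 1 := fun x => by
    simp only [hF]; rw [mul_comm, Complex.norm_exp_ofReal_mul_I]
  have hFc : ContinuousOn F (Set.Ioi 0) :=
    Complex.continuous_exp.comp_continuousOn (continuousOn_const.mul (hpow _))
  have hfc : ∀ q : ℝ, ContinuousOn (fun x : ℝ => F x * ((x ^ q : ℝ) : ℂ)) (Set.Ioi 0) :=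
    fun q => hFc.mul (hpow q)
  have hγ' : (γ : ℂ) ≠ 0 := by exact_mod_cast hγ.ne'
  have hFd : ∀ x : ℝ, 0 < x → HasDerivAt (fun y => F y / (Complex.I * γ))
      (-(F x * ((x ^ (-γ - 1) : ℝ) : ℂ))) x := by
    intro x hx
    have := ((((Real.hasDerivAt_rpow_const (p := -γ)
      (Or.inl hx.ne')).ofReal_comp).const_mul Complex.I).cexp).div_const (Complex.I * γ)
    refine this.congr_deriv ?_
    simp only [hF]
    push_cast
    field_simp [Complex.I_ne_zero]
  have hmul : ∀ a b : ℝ, ∀ ε ∈ Set.Ioc (0:ℝ) 1,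
      (∫ x in ε..1, F x * ((x ^ a : ℝ) : ℂ) * ((x ^ b : ℝ) : ℂ))
        = ∫ x in ε..1, F x * ((x ^ (a + b) : ℝ) : ℂ) := by
    intro a b ε hε
    refine intervalIntegral.integral_congr fun x hx => ?_
    rw [Set.uIcc_of_le hε.2] at hx
    have hx0 : 0 < x := lt_of_lt_of_le hε.1 hx.1
    rw [Real.rpow_add hx0]; push_cast; ring
  have hev : ∀ᶠ x in nhdsWithin (0:ℝ) (Set.Ioi 0), x ∈ Set.Ioc (0:ℝ) 1 :=
    Ioc_mem_nhdsGT (zero_lt_one (α := ℝ))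
  refine ⟨⟨?_, ?_⟩, ?_⟩
  · rintro ⟨L, hL⟩
    by_contra hs
    -- reduce to the exponent `-γ-1`
    have hred : ∃ L : ℂ, Tendsto (fun ε : ℝ => ∫ x in ε..1, F x * ((x ^ (-γ - 1) : ℝ) : ℂ))
        (nhdsWithin 0 (Set.Ioi 0)) (nhds L) := by
      rcases eq_or_lt_of_le (not_lt.1 hs) with h0 | hneg
      · have : -γ - 1 = δ := by linarith
        rw [this]; exact ⟨L, hL⟩
      · set g : ℝ → ℂ := fun x => F x * ((x ^ δ : ℝ) : ℂ) with hg
        set J : ℝ → ℂ := fun ε => ∫ x in ε..1, g x with hJ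
        have hgc : ContinuousOn g (Set.Ioi 0) := hfc δ
        have hJd : ∀ x : ℝ, 0 < x → HasDerivAt J (-g x) x := by
          intro x hx
          refine intervalIntegral.integral_hasDerivAt_left ?_ ?_ ?_
          · refine (hgc.mono ?_).intervalIntegrable
            intro y hy
            exact lt_of_lt_of_le (lt_min hx zero_lt_one) hy.1
          · exact hgc.stronglyMeasurableAtFilter isOpen_Ioi x hx
          · exact hgc.continuousAt (Ioi_mem_nhds hx)
        have hb : ∃ C, ∀ x ∈ Set.Ioc (0:ℝ) 1, ‖J x‖ ≤ C := by
          have e1 : ∀ᶠ x in nhdsWithin (0:ℝ) (Set.Ioi 0), ‖J x‖ < ‖L‖ + 1 :=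
            hL.norm.eventually_lt_const (by linarith)
          obtain ⟨η, hη, hη2⟩ := mem_nhdsGT_iff_exists_Ioo_subset.1 e1
          have hη0 : (0:ℝ) < η := hη
          obtain ⟨C, hC⟩ := (isCompact_Icc (a := η) (b := 1)).exists_bound_of_continuousOn
            (f := J) (fun x hx =>
              (hJd x (lt_of_lt_of_le hη0 hx.1)).continuousAt.continuousWithinAt)
          refine ⟨max (‖L‖ + 1) C, fun x hx => ?_⟩
          rcases lt_or_ge x η with h | h
          · exact le_max_of_le_left (le_of_lt (hη2 ⟨hx.1, h⟩))
          · exact le_max_of_le_right (hC x ⟨h, hx.2⟩)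
        obtain ⟨C, hC⟩ := hb
        obtain ⟨L', hL'⟩ := aux_abel g J hgc hJd C hC (-(γ + δ + 1)) (by linarith)
        refine ⟨L', hL'.congr' ?_⟩
        filter_upwards [hev] with ε hε
        rw [hmul _ _ ε hε]
        have : δ + -(γ + δ + 1) = -γ - 1 := by ring
        rw [this]
    obtain ⟨L', hL'⟩ := hred
    have hform : ∀ ε ∈ Set.Ioc (0:ℝ) 1, (∫ x in ε..1, F x * ((x ^ (-γ - 1) : ℝ) : ℂ))
        = F ε / (Complex.I * γ) - F 1 / (Complex.I * γ) := by
      intro ε hε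
      have hsub : Set.uIcc ε 1 ⊆ Set.Ioi 0 := by
        rw [Set.uIcc_of_le hε.2]; exact fun x hx => lt_of_lt_of_le hε.1 hx.1
      have := intervalIntegral.integral_eq_sub_of_hasDerivAt
        (fun x hx => hFd x (hsub hx)) (((hfc (-γ - 1)).mono hsub).neg.intervalIntegrable)
      rw [intervalIntegral.integral_neg] at this
      linear_combination -this
    refine aux_osc γ hγ (Complex.I * γ * L' + F 1) ?_
    refine ((hL'.const_mul (Complex.I * γ)).add_const (F 1)).congr' ?_
    filter_upwards [hev] with ε hε
    rw [hform ε hε]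
    change _ = F ε
    field_simp [Complex.I_ne_zero]
    ring
  · intro hs
    obtain ⟨L, hL⟩ := aux_abel (fun x => F x * ((x ^ (-γ - 1) : ℝ) : ℂ))
      (fun y => F y / (Complex.I * γ)) (hfc _) hFd (1 / γ)
      (fun x _ => by simp [hFn, abs_of_pos hγ]) (γ + δ + 1) hs
    refine ⟨L, hL.congr' ?_⟩
    filter_upwards [hev] with ε hε
    rw [hmul _ _ ε hε]
    have : -γ - 1 + (γ + δ + 1) = δ := by ring
    rw [this]
  · rw [gt_iff_lt, ← intervalIntegral.integrableOn_Ioo_rpow_iff (s := δ) (zero_lt_one (α := ℝ))]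
    have hm : AEStronglyMeasurable (fun x : ℝ => F x * ((x ^ δ : ℝ) : ℂ))
        (volume.restrict (Set.Ioo 0 1)) :=
      ((hfc δ).mono (fun x hx => hx.1)).aestronglyMeasurable measurableSet_Ioo
    unfold IntegrableOn
    rw [← integrable_norm_iff hm]
    refine integrable_congr (ae_restrict_of_forall_mem measurableSet_Ioo fun x hx => ?_)
    simp only [norm_mul, hFn, one_mul, Complex.norm_real]
    exact Real.norm_of_nonneg (Real.rpow_nonneg hx.1.le _)
end

section
/- Let γ > 0 and δ ∈ ℝ. Then: (i) the improper integral ∫₁^∞ e^{i x^{γ}} x^{δ} dx exists, i.e. the limit of ∫₁^T e^{i x^{γ}} x^{δ} dx as T → ∞ exists in ℂ, if and only if γ > δ + 1; and (ii) the function x ↦ e^{i x^{γ}} x^{δ} is Lebesgue integrable on (1,∞) if and only if δ < -1. -/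
open MeasureTheory Filter

lemma aux_cont (γ δ : ℝ) : ContinuousOn
    (fun x : ℝ => Complex.exp (Complex.I * ((x ^ γ : ℝ) : ℂ)) * ((x ^ δ : ℝ) : ℂ))
    (Set.Ioi 0) := by
  have h : ∀ c : ℝ, ContinuousOn (fun x : ℝ => ((x ^ c : ℝ) : ℂ)) (Set.Ioi 0) := fun c =>
    Complex.continuous_ofReal.comp_continuousOn
      (continuousOn_id.rpow_const (fun x hx => Or.inl (ne_of_gt hx)))
  exact (Complex.continuous_exp.comp_continuousOn (continuousOn_const.mul (h γ))).mul (h δ)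

lemma aux_ii (γ δ : ℝ) : IntegrableOn
        (fun x : ℝ => Complex.exp (Complex.I * ((x ^ γ : ℝ) : ℂ)) * ((x ^ δ : ℝ) : ℂ))
        (Set.Ioi 1) ↔ δ < -1 := by
  rw [← integrableOn_Ioi_rpow_iff (t := 1) one_pos]
  have hm : AEStronglyMeasurable
      (fun x : ℝ => Complex.exp (Complex.I * ((x ^ γ : ℝ) : ℂ)) * ((x ^ δ : ℝ) : ℂ))
      (volume.restrict (Set.Ioi 1)) :=
    ((aux_cont γ δ).mono (Set.Ioi_subset_Ioi zero_le_one)).aestronglyMeasurable measurableSet_Ioi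
  unfold IntegrableOn
  rw [← integrable_norm_iff hm]
  apply integrableOn_congr_fun _ measurableSet_Ioi
  intro x hx
  have hx0 : (0:ℝ) < x := lt_trans one_pos hx
  have : 0 < x ^ δ := Real.rpow_pos_of_pos hx0 δ
  simp only [norm_mul]
  rw [mul_comm Complex.I, Complex.norm_exp_ofReal_mul_I, Complex.norm_real, Real.norm_eq_abs,
    abs_of_pos this, one_mul]

lemma aux_int (γ δ : ℝ) {a b : ℝ} (ha : 0 < a) (hb : 0 < b) : IntervalIntegrable
    (fun x : ℝ => Complex.exp (Complex.I * ((x ^ γ : ℝ) : ℂ)) * ((x ^ δ : ℝ) : ℂ))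
    volume a b :=
  ((aux_cont γ δ).mono (fun _ hx => lt_of_lt_of_le (lt_min ha hb) hx.1)).intervalIntegrable

lemma aux_suff (γ δ : ℝ) (hγ : 0 < γ) (h : γ > δ + 1) : ∃ L : ℂ, Tendsto
        (fun T : ℝ => ∫ x in (1:ℝ)..T,
          Complex.exp (Complex.I * ((x ^ γ : ℝ) : ℂ)) * ((x ^ δ : ℝ) : ℂ))
        atTop (nhds L) := by
  set e : ℝ → ℝ → ℂ := fun c x =>
    Complex.exp (Complex.I * ((x ^ γ : ℝ) : ℂ)) * ((x ^ c : ℝ) : ℂ) with he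
  have hγ' : (γ : ℂ) ≠ 0 := by exact_mod_cast hγ.ne'
  have hd : ∀ x : ℝ, 0 < x → HasDerivAt (e (δ + 1 - γ))
      (Complex.I * γ * e δ x + ((δ + 1 - γ : ℝ) : ℂ) * e (δ - γ) x) x := by
    intro x hx
    have h1 := (Real.hasDerivAt_rpow_const (x := x) (p := γ) (Or.inl hx.ne')).ofReal_comp
    have h2 := (Real.hasDerivAt_rpow_const (x := x) (p := δ + 1 - γ) (Or.inl hx.ne')).ofReal_comp
    have h3 := ((h1.const_mul Complex.I).cexp).mul h2
    refine HasDerivAt.congr_deriv (f := e (δ + 1 - γ)) h3 ?_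
    have e1 : x ^ δ = x ^ (γ - 1) * x ^ (δ + 1 - γ) := by
      rw [← Real.rpow_add hx]; congr 1; ring
    have e2 : δ + 1 - γ - 1 = δ - γ := by ring
    simp only [he]
    rw [e1, e2]
    push_cast
    ring
  have hF : ∀ T : ℝ, 1 ≤ T → (∫ x in (1:ℝ)..T, e δ x) =
      (Complex.I * γ)⁻¹ * (e (δ + 1 - γ) T - e (δ + 1 - γ) 1 -
        ((δ + 1 - γ : ℝ) : ℂ) * ∫ x in (1:ℝ)..T, e (δ - γ) x) := by
    intro T hT
    have hT0 : 0 < T := by linarith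
    have i1 : IntervalIntegrable (e δ) volume 1 T := aux_int γ δ one_pos hT0
    have i2 : IntervalIntegrable (e (δ - γ)) volume 1 T := aux_int γ _ one_pos hT0
    have := intervalIntegral.integral_eq_sub_of_hasDerivAt (a := 1) (b := T)
      (f := e (δ + 1 - γ)) (fun x hx => hd x (by
        rw [Set.uIcc_of_le hT] at hx; linarith [hx.1]))
      ((i1.const_mul _).add (i2.const_mul _))
    rw [intervalIntegral.integral_add (i1.const_mul _) (i2.const_mul _),
      intervalIntegral.integral_const_mul, intervalIntegral.integral_const_mul] at this
    rw [← this]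
    field_simp
    ring
  have t1 : Tendsto (e (δ + 1 - γ)) atTop (nhds 0) := by
    rw [tendsto_zero_iff_norm_tendsto_zero]
    have h0 : Tendsto (fun x : ℝ => x ^ (-(γ - δ - 1))) atTop (nhds 0) :=
      tendsto_rpow_neg_atTop (by linarith)
    refine h0.congr' ?_
    filter_upwards [eventually_gt_atTop 0] with x hx
    have hp : 0 < x ^ (δ + 1 - γ) := Real.rpow_pos_of_pos hx _
    simp only [he, norm_mul]
    rw [mul_comm Complex.I, Complex.norm_exp_ofReal_mul_I, Complex.norm_real, Real.norm_eq_abs,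
      abs_of_pos hp, one_mul]
    congr 1; ring
  have t2 : Tendsto (fun T : ℝ => ∫ x in (1:ℝ)..T, e (δ - γ) x) atTop
      (nhds (∫ x in Set.Ioi (1:ℝ), e (δ - γ) x)) :=
    intervalIntegral_tendsto_integral_Ioi 1 ((aux_ii γ (δ - γ)).2 (by linarith)) tendsto_id
  refine ⟨_, Tendsto.congr' ?_ (((t1.sub_const (e (δ + 1 - γ) 1)).sub
    (t2.const_mul ((δ + 1 - γ : ℝ) : ℂ))).const_mul (Complex.I * γ)⁻¹)⟩
  filter_upwards [eventually_ge_atTop 1] with T hT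
  exact (hF T hT).symm

lemma aux_nec (γ δ : ℝ) (hγ : 0 < γ) (h : γ ≤ δ + 1) {A B : ℝ} (n : ℕ) (hA : 1 ≤ A)
    (hAB : A ≤ B) (hAn : A ^ γ = n * (2 * Real.pi)) (hBn : B ^ γ = n * (2 * Real.pi) + Real.pi) :
    2 / γ ≤ ‖∫ x in A..B, Complex.exp (Complex.I * ((x ^ γ : ℝ) : ℂ)) * ((x ^ δ : ℝ) : ℂ)‖ := by
  have hA0 : 0 < A := by linarith
  have hB0 : 0 < B := by linarith
  refine le_trans ?_ (Complex.abs_im_le_norm _)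
  refine le_trans ?_ (le_abs_self _)
  have hI := aux_int γ δ hA0 hB0
  have e1 := Complex.imCLM.intervalIntegral_comp_comm hI
  have him : ∀ x : ℝ, (Complex.exp (Complex.I * ((x ^ γ : ℝ) : ℂ)) * ((x ^ δ : ℝ) : ℂ)).im
      = Real.sin (x ^ γ) * x ^ δ := by
    intro x
    rw [Complex.im_mul_ofReal, mul_comm Complex.I, Complex.exp_ofReal_mul_I_im]
  simp only [Complex.imCLM_apply, him] at e1
  rw [← e1]
  have hc : ∀ c : ℝ, ContinuousOn (fun x : ℝ => x ^ c) (Set.uIcc A B) := fun c =>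
    continuousOn_id.rpow_const (fun x hx => Or.inl (by
      rw [Set.uIcc_of_le hAB] at hx
      have := hx.1
      simp only [id]
      linarith))
  have hi : ∀ c : ℝ, IntervalIntegrable (fun x : ℝ => Real.sin (x ^ γ) * x ^ c) volume A B :=
    fun c => ((Real.continuous_sin.comp_continuousOn (hc γ)).mul (hc c)).intervalIntegrable
  have hftc : ∫ x in A..B, Real.sin (x ^ γ) * x ^ (γ - 1) = 2 / γ := by
    rw [intervalIntegral.integral_eq_sub_of_hasDerivAt (f := fun x => -Real.cos (x ^ γ) / γ) _ (hi _)]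
    · rw [hAn, hBn, Real.cos_add_pi, Real.cos_nat_mul_two_pi]
      ring
    · intro x hx
      rw [Set.uIcc_of_le hAB] at hx
      have hx0 : x ≠ 0 := by have := hx.1; intro h; linarith
      have := (((Real.hasDerivAt_rpow_const (x := x) (p := γ) (Or.inl hx0)).cos).neg).div_const γ
      refine HasDerivAt.congr_deriv (f := fun x => -Real.cos (x ^ γ) / γ) this ?_
      field_simp
  rw [← hftc]
  apply intervalIntegral.integral_mono_on hAB (hi _) (hi _)
  intro x hx
  have hx1 : 1 ≤ x := hA.trans hx.1
  have l1 : A ^ γ ≤ x ^ γ := Real.rpow_le_rpow hA0.le hx.1 hγ.le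
  have l2 : x ^ γ ≤ B ^ γ := Real.rpow_le_rpow (by linarith) hx.2 hγ.le
  have hs : 0 ≤ Real.sin (x ^ γ) := by
    rw [← Real.sin_sub_nat_mul_two_pi _ n]
    apply Real.sin_nonneg_of_nonneg_of_le_pi <;> linarith
  exact mul_le_mul_of_nonneg_left (Real.rpow_le_rpow_of_exponent_le hx1 (by linarith)) hs

/-- Lemma 1(b): for `γ > 0` and `δ ∈ ℝ`, the improper integral
`∫₁^∞ e^{i x^{γ}} x^{δ} dx` exists iff `γ > δ + 1`, and the integrand is
Lebesgue integrable on `(1,∞)` iff `δ < -1`. -/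
theorem stmt1 (γ δ : ℝ) (hγ : 0 < γ) :
    ((∃ L : ℂ, Tendsto
        (fun T : ℝ => ∫ x in (1:ℝ)..T,
          Complex.exp (Complex.I * ((x ^ γ : ℝ) : ℂ)) * ((x ^ δ : ℝ) : ℂ))
        atTop (nhds L)) ↔ γ > δ + 1) ∧
    (IntegrableOn
        (fun x : ℝ => Complex.exp (Complex.I * ((x ^ γ : ℝ) : ℂ)) * ((x ^ δ : ℝ) : ℂ))
        (Set.Ioi 1) ↔ δ < -1) := by
  refine ⟨⟨?_, aux_suff γ δ hγ⟩, aux_ii γ δ⟩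
  rintro ⟨L, hL⟩
  by_contra hcon
  have h : γ ≤ δ + 1 := not_lt.mp hcon
  have hn : Tendsto (fun n : ℕ => (n : ℝ) * (2 * Real.pi)) atTop atTop :=
    tendsto_natCast_atTop_atTop.atTop_mul_const (by positivity)
  have tr := tendsto_rpow_atTop (inv_pos.mpr hγ)
  have tA := tr.comp hn
  have tB := tr.comp (tendsto_atTop_add_const_right _ Real.pi hn)
  have hlim := ((hL.comp tB).sub (hL.comp tA)).norm
  rw [sub_self, norm_zero] at hlim
  have hpos : (0:ℝ) < 2 / γ := by positivity
  obtain ⟨n, h1, h2⟩ := ((hlim.eventually (gt_mem_nhds hpos)).and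
    (tA.eventually (eventually_ge_atTop 1))).exists
  simp only [Function.comp] at h1 h2
  have hpi := Real.pi_pos
  have hn0 : (0:ℝ) ≤ n * (2 * Real.pi) := by positivity
  have hAB : ((n:ℝ) * (2 * Real.pi)) ^ γ⁻¹ ≤ ((n:ℝ) * (2 * Real.pi) + Real.pi) ^ γ⁻¹ :=
    Real.rpow_le_rpow hn0 (by linarith) (inv_pos.mpr hγ).le
  have key := aux_nec γ δ hγ h n h2 hAB (Real.rpow_inv_rpow hn0 hγ.ne')
    (Real.rpow_inv_rpow (by linarith) hγ.ne')
  rw [intervalIntegral.integral_interval_sub_left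
    (aux_int γ δ one_pos (by linarith)) (aux_int γ δ one_pos (by linarith))] at h1
  linarith
end

section
/- Let a ≤ b be real numbers, let f : ℝ → ℂ be Lebesgue integrable on [a,b], and let g : ℝ → ℝ have bounded variation on [a,b]. Then |∫_a^b f(x) g(x) dx| ≤ |∫_a^b f(x) dx| · inf_{x∈[a,b]} |g(x)| + (sup_{a ≤ c ≤ d ≤ b} |∫_c^d f(x) dx|) · V_{[a,b]} g. -/
open MeasureTheory Filter

theorem aux_local_global (a b δ : ℝ) (hδ : 0 < δ) (K : ℝ → ℂ) (w : ℝ → ℝ)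
    (h : ∀ x ∈ Set.Icc a b, ∀ y ∈ Set.Icc a b, x ≤ y → y - x ≤ δ → ‖K y - K x‖ ≤ w y - w x) :
    ∀ x ∈ Set.Icc a b, ∀ y ∈ Set.Icc a b, x ≤ y → ‖K y - K x‖ ≤ w y - w x := by
  have key : ∀ n : ℕ, ∀ x ∈ Set.Icc a b, ∀ y ∈ Set.Icc a b, x ≤ y → y - x ≤ n * δ →
      ‖K y - K x‖ ≤ w y - w x := by
    intro n
    induction n with
    | zero =>
      intro x hx y hy hxy hn
      refine h x hx y hy hxy ?_
      simp at hn
      linarith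
    | succ n ih =>
      intro x hx y hy hxy hn
      push_cast at hn
      by_cases hc : y - x ≤ δ
      · exact h x hx y hy hxy hc
      push Not at hc
      have hz : y - δ ∈ Set.Icc a b := ⟨by linarith [hx.1], by linarith [hy.2]⟩
      have h1 := ih x hx (y - δ) hz (by linarith) (by linarith)
      have h2 := h (y - δ) hz y hy (by linarith) (by linarith)
      have h3 := norm_add_le (K y - K (y - δ)) (K (y - δ) - K x)
      rw [sub_add_sub_cancel] at h3
      linarith
  intro x hx y hy hxy
  obtain ⟨n, hn⟩ := exists_nat_ge ((y - x) / δ)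
  exact key n x hx y hy hxy ((div_le_iff₀ hδ).1 hn)

theorem aux_integrable (a b : ℝ) (hab : a ≤ b) (f : ℝ → ℂ) (g : ℝ → ℝ)
    (hf : IntegrableOn f (Set.Icc a b))
    (hg : BoundedVariationOn g (Set.Icc a b)) :
    IntegrableOn (fun x => f x * ((g x : ℝ) : ℂ)) (Set.Icc a b) := by
  have ha : a ∈ Set.Icc a b := Set.left_mem_Icc.2 hab
  refine Integrable.mul_bdd (c := |g a| + (eVariationOn g (Set.Icc a b)).toReal) hf ?_ ?_
  · obtain ⟨p, q, hp, hq, h⟩ := hg.locallyBoundedVariationOn.exists_monotoneOn_sub_monotoneOn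
    have hm : AEMeasurable g (volume.restrict (Set.Icc a b)) := by
      rw [h]
      exact (aemeasurable_restrict_of_monotoneOn measurableSet_Icc hp).sub
        (aemeasurable_restrict_of_monotoneOn measurableSet_Icc hq)
    exact (Complex.measurable_ofReal.comp_aemeasurable hm).aestronglyMeasurable
  · refine (ae_restrict_iff' measurableSet_Icc).2 (Eventually.of_forall fun x hx => ?_)
    have h1 := hg.dist_le hx ha
    rw [Real.dist_eq] at h1
    rw [Complex.norm_real, Real.norm_eq_abs]
    have h2 := abs_add_le (g x - g a) (g a)
    rw [sub_add_cancel] at h2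
    linarith

theorem aux_ii_s2 {E : Type*} [NormedAddCommGroup E] (a b : ℝ) (f : ℝ → E)
    (hf : IntegrableOn f (Set.Icc a b))
    {x y : ℝ} (hx : x ∈ Set.Icc a b) (hy : y ∈ Set.Icc a b) :
    IntervalIntegrable f volume x y :=
  (hf.mono_set (Set.uIcc_subset_Icc hx hy)).intervalIntegrable

theorem aux_main (a b : ℝ) (hab : a ≤ b) (f : ℝ → ℂ) (g : ℝ → ℝ)
    (hf : IntegrableOn f (Set.Icc a b))
    (hg : BoundedVariationOn g (Set.Icc a b)) (p : ℝ) (hp : p ∈ Set.Icc a b) (M : ℝ)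
    (hM : ∀ x ∈ Set.Icc a b, ‖∫ t in p..x, f t‖ ≤ M) :
    ∀ x ∈ Set.Icc a b, ∀ y ∈ Set.Icc a b, x ≤ y →
      ‖((∫ t in p..y, f t * ((g t : ℝ) : ℂ)) - g y * ∫ t in p..y, f t) -
       ((∫ t in p..x, f t * ((g t : ℝ) : ℂ)) - g x * ∫ t in p..x, f t)‖ ≤
      M * (variationOnFromTo g (Set.Icc a b) a y - variationOnFromTo g (Set.Icc a b) a x) := by
  have hfg := aux_integrable a b hab f g hf hg
  have hl := hg.locallyBoundedVariationOn
  have ha : a ∈ Set.Icc a b := Set.left_mem_Icc.2 hab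
  set v := variationOnFromTo g (Set.Icc a b) a with hv
  have hvm : MonotoneOn v (Set.Icc a b) := variationOnFromTo.monotoneOn hl ha
  have hgv : ∀ x ∈ Set.Icc a b, ∀ y ∈ Set.Icc a b, x ≤ y → |g y - g x| ≤ v y - v x :=
    fun x hx y hy hxy => variationOnFromTo.abs_sub_le_sub_of_le hl ha hx hy hxy
  have hn : IntegrableOn (fun t => ‖f t‖) (Set.Icc a b) := hf.norm
  have huc : UniformContinuousOn (fun x => ∫ t in a..x, ‖f t‖) (Set.Icc a b) := by
    refine isCompact_Icc.uniformContinuousOn_of_continuous ?_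
    have := intervalIntegral.continuousOn_primitive_interval (a := a) (b := b)
      (f := fun t => ‖f t‖) (μ := volume) (by rwa [Set.uIcc_of_le hab])
    rwa [Set.uIcc_of_le hab] at this
  have eps : ∀ ε > 0, ∀ x ∈ Set.Icc a b, ∀ y ∈ Set.Icc a b, x ≤ y →
      ‖((∫ t in p..y, f t * ((g t : ℝ) : ℂ)) - g y * ∫ t in p..y, f t) -
       ((∫ t in p..x, f t * ((g t : ℝ) : ℂ)) - g x * ∫ t in p..x, f t)‖ ≤
      (M + ε) * v y - (M + ε) * v x := by
    intro ε hε
    obtain ⟨δ, hδ, hd⟩ := Metric.uniformContinuousOn_iff.1 huc ε hε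
    refine aux_local_global a b (δ / 2) (by positivity)
      (fun y => (∫ t in p..y, f t * ((g t : ℝ) : ℂ)) - g y * ∫ t in p..y, f t)
      (fun y => (M + ε) * v y) ?_
    intro x hx y hy hxy hyx
    have e1 : ∫ t in x..y, ‖f t‖ ≤ ε := by
      have h1 := hd y hy x hx (by rw [Real.dist_eq, abs_of_nonneg (by linarith)]; linarith)
      rw [Real.dist_eq] at h1
      rw [intervalIntegral.integral_interval_sub_left (aux_ii_s2 a b _ hn ha hy)
        (aux_ii_s2 a b _ hn ha hx)] at h1
      exact (le_abs_self _).trans h1.le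
    have i1 := aux_ii_s2 a b _ hf hx hy
    have i2 := aux_ii_s2 a b _ hfg hx hy
    have e2 : ‖∫ t in x..y, f t * ((g t - g y : ℝ) : ℂ)‖ ≤ ε * (v y - v x) := by
      have h1 : ‖∫ t in x..y, f t * ((g t - g y : ℝ) : ℂ)‖ ≤
          ∫ t in x..y, ‖f t‖ * (v y - v x) := by
        refine intervalIntegral.norm_integral_le_of_norm_le hxy
          (Eventually.of_forall fun t ht => ?_) ((aux_ii_s2 a b _ hn hx hy).mul_const _)
        have htm : t ∈ Set.Icc a b := ⟨hx.1.trans ht.1.le, ht.2.trans hy.2⟩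
        rw [norm_mul, Complex.norm_real, Real.norm_eq_abs, abs_sub_comm]
        have h3 := hgv t htm y hy ht.2
        have h4 := hvm hx htm ht.1.le
        gcongr
        linarith
      rw [intervalIntegral.integral_mul_const] at h1
      refine h1.trans ?_
      have := hvm hx hy hxy
      exact mul_le_mul_of_nonneg_right e1 (by linarith)
    have e3 : ((∫ t in p..y, f t * ((g t : ℝ) : ℂ)) - g y * ∫ t in p..y, f t) -
       ((∫ t in p..x, f t * ((g t : ℝ) : ℂ)) - g x * ∫ t in p..x, f t) =
       (∫ t in x..y, f t * ((g t - g y : ℝ) : ℂ)) +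
         ((g x - g y : ℝ) : ℂ) * ∫ t in p..x, f t := by
      have h1 : ∫ t in x..y, f t * ((g t - g y : ℝ) : ℂ) =
          (∫ t in x..y, f t * ((g t : ℝ) : ℂ)) - (∫ t in x..y, f t) * (g y : ℂ) := by
        rw [← intervalIntegral.integral_mul_const,
          ← intervalIntegral.integral_sub i2 (i1.mul_const _)]
        congr 1
        ext t
        push_cast
        ring
      rw [h1, ← intervalIntegral.integral_add_adjacent_intervals (aux_ii_s2 a b _ hf hp hx) i1,
        ← intervalIntegral.integral_add_adjacent_intervals (aux_ii_s2 a b _ hfg hp hx) i2]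
      push_cast
      ring
    rw [e3]
    refine (norm_add_le _ _).trans ?_
    have e4 : ‖((g x - g y : ℝ) : ℂ) * ∫ t in p..x, f t‖ ≤ (v y - v x) * M := by
      rw [norm_mul, Complex.norm_real, Real.norm_eq_abs, abs_sub_comm]
      exact mul_le_mul (hgv x hx y hy hxy) (hM x hx) (norm_nonneg _)
        (by linarith [hvm hx hy hxy])
    linarith
  intro x hx y hy hxy
  have h0 : Tendsto (fun ε : ℝ => (M + ε) * v y - (M + ε) * v x) (nhdsWithin 0 (Set.Ioi 0))
      (nhds (M * (v y - v x))) := by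
    have : Continuous (fun ε : ℝ => (M + ε) * v y - (M + ε) * v x) := by fun_prop
    have h := (this.tendsto 0).mono_left (nhdsWithin_le_nhds (s := Set.Ioi 0))
    convert h using 2
    ring
  refine ge_of_tendsto h0 ?_
  filter_upwards [self_mem_nhdsWithin] with ε hε
  exact eps ε hε x hx y hy hxy

/-- Lemma 2: for `f` Lebesgue integrable on `[a,b]` and `g` of bounded variation on `[a,b]`,
`|∫_a^b f g| ≤ |∫_a^b f| · inf_{[a,b]} |g| + ‖f‖_{[a,b]} · V_{[a,b]} g`, where
`‖f‖_{[a,b]} = sup_{a ≤ c ≤ d ≤ b} |∫_c^d f|` is the Alexiewicz norm. -/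
theorem stmt2 (a b : ℝ) (hab : a ≤ b) (f : ℝ → ℂ) (g : ℝ → ℝ)
    (hf : IntegrableOn f (Set.Icc a b))
    (hg : BoundedVariationOn g (Set.Icc a b)) :
    ‖∫ x in a..b, f x * ((g x : ℝ) : ℂ)‖ ≤
      ‖∫ x in a..b, f x‖ * sInf {r : ℝ | ∃ x ∈ Set.Icc a b, r = |g x|} +
      sSup {r : ℝ | ∃ c d : ℝ, a ≤ c ∧ c ≤ d ∧ d ≤ b ∧ r = ‖∫ x in c..d, f x‖} *
        (eVariationOn g (Set.Icc a b)).toReal := by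
  have ha : a ∈ Set.Icc a b := Set.left_mem_Icc.2 hab
  have hb : b ∈ Set.Icc a b := Set.right_mem_Icc.2 hab
  have hfg := aux_integrable a b hab f g hf hg
  set M := sSup {r : ℝ | ∃ c d : ℝ, a ≤ c ∧ c ≤ d ∧ d ≤ b ∧ r = ‖∫ x in c..d, f x‖} with hMdef
  have hbdd : BddAbove {r : ℝ | ∃ c d : ℝ, a ≤ c ∧ c ≤ d ∧ d ≤ b ∧ r = ‖∫ x in c..d, f x‖} := by
    refine ⟨∫ x in Set.Icc a b, ‖f x‖, ?_⟩
    rintro r ⟨c, d, hc, hcd, hd, rfl⟩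
    rw [intervalIntegral.integral_of_le hcd]
    refine (norm_integral_le_integral_norm _).trans ?_
    refine setIntegral_mono_set hf.norm (Eventually.of_forall fun _ => norm_nonneg _) ?_
    exact (Set.Ioc_subset_Icc_self.trans (Set.Icc_subset_Icc hc hd)).eventuallyLE
  have hMle : ∀ c d : ℝ, a ≤ c → c ≤ d → d ≤ b → ‖∫ x in c..d, f x‖ ≤ M :=
    fun c d h1 h2 h3 => le_csSup hbdd ⟨c, d, h1, h2, h3, rfl⟩
  have k1 := aux_main a b hab f g hf hg a ha M (fun x hx => hMle a x le_rfl hx.1 hx.2)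
  have k2 := aux_main a b hab f g hf hg b hb M (fun x hx => by
    rw [intervalIntegral.integral_symm, norm_neg]
    exact hMle x b hx.1 hx.2 le_rfl)
  have hV : variationOnFromTo g (Set.Icc a b) a b = (eVariationOn g (Set.Icc a b)).toReal := by
    rw [variationOnFromTo.eq_of_le _ _ hab, Set.inter_self]
  have pt : ∀ x ∈ Set.Icc a b, ‖∫ x in a..b, f x * ((g x : ℝ) : ℂ)‖ ≤
      ‖∫ x in a..b, f x‖ * |g x| + M * (eVariationOn g (Set.Icc a b)).toReal := by
    intro x hx
    have h1 := k1 a ha x hx hx.1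
    have h2 := k2 x hx b hb hx.2
    rw [variationOnFromTo.self] at h1
    rw [hV] at h2
    simp only [intervalIntegral.integral_same, mul_zero, sub_zero, zero_sub] at h1 h2
    rw [intervalIntegral.integral_symm x b, intervalIntegral.integral_symm x b] at h2
    have e : ∫ x in a..b, f x * ((g x : ℝ) : ℂ) = (∫ x in a..b, f x) * (g x : ℂ) +
        (((∫ t in a..x, f t * ((g t : ℝ) : ℂ)) - g x * ∫ t in a..x, f t) +
        -(-(∫ t in x..b, f t * ((g t : ℝ) : ℂ)) - g x * -∫ t in x..b, f t)) := by
      rw [← intervalIntegral.integral_add_adjacent_intervals (aux_ii_s2 a b _ hf ha hx)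
          (aux_ii_s2 a b _ hf hx hb),
        ← intervalIntegral.integral_add_adjacent_intervals (aux_ii_s2 a b _ hfg ha hx)
          (aux_ii_s2 a b _ hfg hx hb)]
      ring
    rw [e]
    refine (norm_add_le _ _).trans ?_
    have h3 := norm_add_le ((∫ t in a..x, f t * ((g t : ℝ) : ℂ)) - g x * ∫ t in a..x, f t)
      (-(-(∫ t in x..b, f t * ((g t : ℝ) : ℂ)) - g x * -∫ t in x..b, f t))
    rw [norm_mul, Complex.norm_real, Real.norm_eq_abs]
    linarith
  set S := {r : ℝ | ∃ x ∈ Set.Icc a b, r = |g x|} with hS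
  have hne : S.Nonempty := ⟨|g a|, a, ha, rfl⟩
  refine le_of_forall_pos_le_add fun ε hε => ?_
  set A := ‖∫ x in a..b, f x‖ with hA
  have hA0 : 0 ≤ A := norm_nonneg _
  obtain ⟨r, ⟨x, hx, rfl⟩, hr⟩ := Real.lt_sInf_add_pos hne (ε := ε / (A + 1)) (by positivity)
  have h1 := pt x hx
  have h2 : A * |g x| ≤ A * (sInf S + ε / (A + 1)) := mul_le_mul_of_nonneg_left hr.le hA0
  have h3 : A * (ε / (A + 1)) ≤ ε := by
    rw [mul_div_assoc', div_le_iff₀ (by positivity)]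
    nlinarith
  rw [mul_add] at h2
  linarith
end

section
/- Let f : ℝ → ℂ be locally integrable and suppose there exists a ≥ 0 such that f has bounded variation on [a,∞) and on (-∞,-a] (real and imaginary parts each of bounded variation) and f(x) → 0 as x → ∞ and as x → -∞. Then for every s ≠ 0 the Fourier transform f̂(s) exists, i.e. ∫_{-T₁}^{T₂} e^{-isx} f(x) dx converges to a finite limit as T₁ → ∞ and T₂ → ∞ independently. -/
open MeasureTheory Filter

/-- The Fourier transform of `f` exists at `s` with value `L`:
`∫_{-T₁}^{T₂} e^{-isx} f(x) dx → L` as `T₁ → ∞` and `T₂ → ∞` independently. -/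
def HasFourierHK (f : ℝ → ℂ) (s : ℝ) (L : ℂ) : Prop :=
  Tendsto (fun T : ℝ × ℝ =>
      ∫ x in (-T.1)..T.2, Complex.exp (-(Complex.I * (s : ℂ) * (x : ℂ))) * f x)
    (atTop ×ˢ atTop) (nhds L)

lemma half_line (f : ℝ → ℂ) (hf : ∀ a b : ℝ, IntervalIntegrable f volume a b)
    (v : ℝ → ℝ) (hv : Monotone v) (M : ℝ) (hM : ∀ x, |v x| ≤ M) (a : ℝ)
    (hfv : ∀ x y, a ≤ x → x ≤ y → ‖f y - f x‖ ≤ v y - v x)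
    (hlim : Tendsto f atTop (nhds 0)) (s : ℝ) (hs : s ≠ 0) :
    ∃ L : ℂ, Tendsto (fun T : ℝ =>
      ∫ x in (0:ℝ)..T, Complex.exp (-(Complex.I * (s : ℂ) * (x : ℂ))) * f x) atTop (nhds L) := by
  set h : ℝ := Real.pi / |s| with hh
  have hpos : 0 < h := div_pos Real.pi_pos (abs_pos.2 hs)
  set e : ℝ → ℂ := fun x => Complex.exp (-(Complex.I * (s : ℂ) * (x : ℂ))) with he
  have hec : Continuous e := by rw [he]; fun_prop
  have hen : ∀ x, ‖e x‖ = 1 := by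
    intro x
    simp only [he, Complex.norm_exp]
    simp
  have hesh : ∀ x, e (x - h) = - e x := by
    intro x
    have h1 : -(Complex.I * (s : ℂ) * ((x - h : ℝ) : ℂ))
        = -(Complex.I * (s : ℂ) * (x : ℂ)) + ((s * h : ℝ) : ℂ) * Complex.I := by
      push_cast; ring
    simp only [he]
    rw [h1, Complex.exp_add]
    have h2 : Complex.exp (((s * h : ℝ) : ℂ) * Complex.I) = -1 := by
      rcases lt_or_gt_of_ne hs with hs' | hs'
      · have : s * h = -Real.pi := by
          rw [hh, abs_of_neg hs']; field_simp
        rw [this]; push_cast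
        rw [neg_mul, Complex.exp_neg, Complex.exp_pi_mul_I]; norm_num
      · have : s * h = Real.pi := by
          rw [hh, abs_of_pos hs']; field_simp
        rw [this, Complex.exp_pi_mul_I]
    rw [h2]; ring
  have hF : ∀ p q : ℝ, IntervalIntegrable (fun x => e x * f x) volume p q := fun p q =>
    (hf p q).continuousOn_mul hec.continuousOn
  have hfs : ∀ p q : ℝ, IntervalIntegrable (fun x => f (x - h)) volume p q := fun p q => by
    have := (hf (p - h) (q - h)).comp_sub_right h
    simpa using this
  have hG : ∀ p q : ℝ, IntervalIntegrable (fun x => e x * f (x - h)) volume p q := fun p q =>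
    (hfs p q).continuousOn_mul hec.continuousOn
  have hvI : ∀ p q : ℝ, IntervalIntegrable v volume p q := fun p q => hv.intervalIntegrable
  have hvs : ∀ p q : ℝ, IntervalIntegrable (fun x => v (x - h)) volume p q := fun p q => by
    have := (hvI (p - h) (q - h)).comp_sub_right h
    simpa using this
  set c := a + h with hc
  set g : ℝ → ℂ := fun x => e x * f x - e x * f (x - h) with hg
  have hgI : ∀ p q : ℝ, IntervalIntegrable g volume p q := fun p q => (hF p q).sub (hG p q)
  have hvb : ∀ p, |∫ x in (p - h)..p, v x| ≤ M * h := by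
    intro p
    have := intervalIntegral.norm_integral_le_of_norm_le_const (a := p - h) (b := p) (f := v)
      (C := M) (fun x _ => hM x)
    simpa [abs_of_pos hpos] using this
  have hint : IntegrableOn g (Set.Ioi c) := by
    refine integrableOn_Ioi_of_intervalIntegral_norm_bounded (l := atTop) (b := id)
      (2 * (M * h)) c (fun T => ?_) tendsto_id ?_
    · exact (hgI c T).1
    · filter_upwards [eventually_ge_atTop c] with T hT
      have h1 : ∫ x in c..T, ‖g x‖ ≤ ∫ x in c..T, (v x - v (x - h)) := by
        refine intervalIntegral.integral_mono_on hT (hgI c T).norm ((hvI c T).sub (hvs c T)) ?_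
        intro x hx
        have : g x = e x * (f x - f (x - h)) := by simp only [hg]; ring
        rw [this, norm_mul, hen, one_mul]
        exact hfv _ _ (by linarith [hx.1]) (by linarith)
      have h2 : ∫ x in c..T, (v x - v (x - h)) = (∫ x in (T - h)..T, v x) - ∫ x in (c - h)..c, v x := by
        rw [intervalIntegral.integral_sub (hvI c T) (hvs c T),
          intervalIntegral.integral_comp_sub_right v h]
        have e1 := intervalIntegral.integral_add_adjacent_intervals (hvI (c-h) c) (hvI c T)
        have e2 := intervalIntegral.integral_add_adjacent_intervals (hvI (c-h) (T-h)) (hvI (T-h) T)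
        linarith
      have h3 := abs_le.1 (hvb T)
      have h4 := abs_le.1 (hvb c)
      simp only [id]
      linarith [h3.2, h4.1]
  have hlimg := intervalIntegral_tendsto_integral_Ioi c hint (tendsto_id (α := ℝ))
  have htail : Tendsto (fun T : ℝ => ∫ x in (T - h)..T, e x * f x) atTop (nhds 0) := by
    rw [Metric.tendsto_nhds]
    intro ε hε
    have h1 : ∀ᶠ x in atTop, ‖f x‖ < ε / (2 * h) := by
      have := (Metric.tendsto_nhds.1 hlim) (ε / (2 * h)) (by positivity)
      simpa using this
    obtain ⟨N, hN⟩ := eventually_atTop.1 h1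
    filter_upwards [eventually_ge_atTop (N + h)] with T hT
    have := intervalIntegral.norm_integral_le_of_norm_le_const (a := T - h) (b := T)
      (f := fun x => e x * f x) (C := ε / (2 * h)) (fun x hx => by
        rw [Set.uIoc_of_le (by linarith)] at hx
        rw [norm_mul, hen, one_mul]
        exact (hN x (by linarith [hx.1])).le)
    rw [dist_zero_right]
    refine this.trans_lt ?_
    have h5 : T - (T - h) = h := by ring
    rw [h5, abs_of_pos hpos]
    have : ε / (2 * h) * h = ε / 2 := by field_simp
    linarith
  have key : ∀ T : ℝ, ∫ x in (0:ℝ)..T, e x * f x = (∫ x in (0:ℝ)..c, e x * f x) +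
      (1/2) * ((∫ x in c..T, g x) - (∫ x in a..c, e x * f x) + ∫ x in (T - h)..T, e x * f x) := by
    intro T
    have h1 : ∫ x in c..T, g x = (∫ x in c..T, e x * f x) + ∫ x in a..(T - h), e x * f x := by
      simp only [hg]
      rw [intervalIntegral.integral_sub (hF c T) (hG c T)]
      have : ∫ x in c..T, e x * f (x - h) = - ∫ x in a..(T - h), e x * f x := by
        have := intervalIntegral.integral_comp_sub_right (a := c) (b := T)
          (fun x => e x * f x) h
        have hca : c - h = a := by rw [hc]; ring
        rw [hca] at this
        rw [← this, ← intervalIntegral.integral_neg]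
        refine intervalIntegral.integral_congr fun x _ => ?_
        simp only [hesh]; ring
      rw [this]; ring
    have e1 := intervalIntegral.integral_add_adjacent_intervals (hF a c) (hF c T)
    have e2 := intervalIntegral.integral_add_adjacent_intervals (hF a (T-h)) (hF (T-h) T)
    have e3 := intervalIntegral.integral_add_adjacent_intervals (hF 0 c) (hF c T)
    rw [h1]
    linear_combination -e3 + (1/2) * e1 - (1/2) * e2
  refine ⟨_, Tendsto.congr (fun T => (key T).symm)
    (tendsto_const_nhds.add (tendsto_const_nhds.mul ((hlimg.sub tendsto_const_nhds).add htail)))⟩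

lemma half_line_bv (f : ℝ → ℂ) (hf : ∀ a b : ℝ, IntervalIntegrable f volume a b) (a : ℝ)
    (h1 : BoundedVariationOn (fun x => (f x).re) (Set.Ici a))
    (h2 : BoundedVariationOn (fun x => (f x).im) (Set.Ici a))
    (hlim : Tendsto f atTop (nhds 0)) (s : ℝ) (hs : s ≠ 0) :
    ∃ L : ℂ, Tendsto (fun T : ℝ =>
      ∫ x in (0:ℝ)..T, Complex.exp (-(Complex.I * (s : ℂ) * (x : ℂ))) * f x) atTop (nhds L) := by
  have l1 := h1.locallyBoundedVariationOn
  have l2 := h2.locallyBoundedVariationOn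
  have ha : a ∈ Set.Ici a := Set.self_mem_Ici
  have hmx : ∀ x, max x a ∈ Set.Ici a := fun x => Set.mem_Ici.2 (le_max_right x a)
  refine half_line f hf (fun x => variationOnFromTo (fun x => (f x).re) (Set.Ici a) a (max x a) +
    variationOnFromTo (fun x => (f x).im) (Set.Ici a) a (max x a)) ?_
    ((eVariationOn (fun x => (f x).re) (Set.Ici a)).toReal +
      (eVariationOn (fun x => (f x).im) (Set.Ici a)).toReal) ?_ a ?_ hlim s hs
  · intro x y hxy
    have hm : max x a ≤ max y a := max_le_max_right a hxy
    exact add_le_add (variationOnFromTo.monotoneOn l1 ha (hmx x) (hmx y) hm)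
      (variationOnFromTo.monotoneOn l2 ha (hmx x) (hmx y) hm)
  · intro x
    exact (abs_add_le _ _).trans (add_le_add (variationOnFromTo.abs_le_eVariationOn h1)
      (variationOnFromTo.abs_le_eVariationOn h2))
  · intro x y hx hxy
    have hy : a ≤ y := hx.trans hxy
    simp only [max_eq_left hx, max_eq_left hy]
    have i1 := variationOnFromTo.abs_sub_le_sub_of_le l1 ha hx hy hxy
    have i2 := variationOnFromTo.abs_sub_le_sub_of_le l2 ha hx hy hxy
    have i3 := Complex.norm_le_abs_re_add_abs_im (f y - f x)
    simp only [Complex.sub_re, Complex.sub_im] at i3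
    linarith

/-- Proposition 1(b) (bounded variation case): if `f` is locally integrable, of bounded
variation (real and imaginary parts) in a neighbourhood of `±∞` with limit `0` at `±∞`,
then `f̂(s)` exists for every `s ≠ 0`. -/
theorem stmt3 (f : ℝ → ℂ)
    (hloc : ∀ a b : ℝ, IntegrableOn f (Set.Icc a b))
    (hbv : ∃ a : ℝ, 0 ≤ a ∧
      BoundedVariationOn (fun x => (f x).re) (Set.Ici a) ∧
      BoundedVariationOn (fun x => (f x).im) (Set.Ici a) ∧
      BoundedVariationOn (fun x => (f x).re) (Set.Iic (-a)) ∧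
      BoundedVariationOn (fun x => (f x).im) (Set.Iic (-a)))
    (hlim₁ : Tendsto f atTop (nhds 0))
    (hlim₂ : Tendsto f atBot (nhds 0)) :
    ∀ s : ℝ, s ≠ 0 → ∃ L : ℂ, HasFourierHK f s L := by
  intro s hs
  obtain ⟨a, -, h1, h2, h3, h4⟩ := hbv
  have hf : ∀ a b : ℝ, IntervalIntegrable f volume a b := fun p q =>
    ⟨(hloc p q).mono_set Set.Ioc_subset_Icc_self, (hloc q p).mono_set Set.Ioc_subset_Icc_self⟩
  have hf' : ∀ a b : ℝ, IntervalIntegrable (fun x => f (-x)) volume a b := fun p q => by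
    have := (IntervalIntegrable.iff_comp_neg (by simp)).1 (hf (-p) (-q))
    simpa using this
  have hmaps : Set.MapsTo (fun x : ℝ => -x) (Set.Ici a) (Set.Iic (-a)) := by
    intro x hx
    exact neg_le_neg (Set.mem_Ici.1 hx)
  have hanti : AntitoneOn (fun x : ℝ => -x) (Set.Ici a) := fun x _ y _ hxy => neg_le_neg hxy
  obtain ⟨L₂, hL₂⟩ := half_line_bv f hf a h1 h2 hlim₁ s hs
  obtain ⟨L₁, hL₁⟩ := half_line_bv (fun x => f (-x)) hf' a
    (ne_top_of_le_ne_top h3 (eVariationOn.comp_le_of_antitoneOn (fun x => (f x).re) _ hanti hmaps))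
    (ne_top_of_le_ne_top h4 (eVariationOn.comp_le_of_antitoneOn (fun x => (f x).im) _ hanti hmaps))
    (hlim₂.comp tendsto_neg_atTop_atBot) (-s) (neg_ne_zero.2 hs)
  refine ⟨L₁ + L₂, ?_⟩
  unfold HasFourierHK
  refine Tendsto.congr ?_ ((hL₁.comp tendsto_fst).add (hL₂.comp tendsto_snd))
  rintro ⟨T₁, T₂⟩
  have hF : ∀ p q : ℝ, IntervalIntegrable
      (fun x : ℝ => Complex.exp (-(Complex.I * (s : ℂ) * (x : ℂ))) * f x) volume p q := fun p q =>
    (hf p q).continuousOn_mul (by fun_prop)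
  have e1 := intervalIntegral.integral_comp_neg (a := 0) (b := T₁)
    (fun x : ℝ => Complex.exp (-(Complex.I * (s : ℂ) * (x : ℂ))) * f x)
  have e2 := intervalIntegral.integral_add_adjacent_intervals (hF (-T₁) 0) (hF 0 T₂)
  rw [neg_zero] at e1
  simp only [Function.comp]
  rw [← e2, ← e1]
  congr 1
  refine intervalIntegral.integral_congr fun x _ => ?_
  simp
end

section
/- Let f : ℝ → ℂ be Lebesgue integrable on (0,∞) and define F₁(x) = ∫_x^∞ f(t) dt. Then for every s ≠ 0 the improper integral lim_{T→∞} ∫_0^T e^{-isx} F₁(x) dx exists, and i s · lim_{T→∞} ∫_0^T e^{-isx} F₁(x) dx = F₁(0) − ∫_0^∞ e^{-isx} f(x) dx. -/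
open MeasureTheory Filter

lemma aux_exp (s : ℝ) (hs : s ≠ 0) (b : ℝ) :
    ∫ x in (0:ℝ)..b, Complex.exp (-(Complex.I * (s : ℂ) * (x : ℂ))) =
      (1 - Complex.exp (-(Complex.I * (s : ℂ) * (b : ℂ)))) / (Complex.I * s) := by
  have hc : -(Complex.I * (s : ℂ)) ≠ 0 := by simp [hs]
  have h := integral_exp_mul_complex (a := 0) (b := b) hc
  simp only [neg_mul] at h
  rw [h, div_neg, ← neg_div]
  simp

lemma aux_norm (s x : ℝ) : ‖Complex.exp (-(Complex.I * (s : ℂ) * (x : ℂ)))‖ = 1 := by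
  rw [Complex.norm_exp]; simp

lemma aux_fubini (f : ℝ → ℂ) (hf : IntegrableOn f (Set.Ioi 0)) (s : ℝ) (hs : s ≠ 0)
    (T : ℝ) (hT : 0 ≤ T) :
    ∫ x in (0:ℝ)..T,
          Complex.exp (-(Complex.I * (s : ℂ) * (x : ℂ))) * (∫ t in Set.Ioi x, f t) =
    ∫ t in Set.Ioi (0:ℝ),
      (1 - Complex.exp (-(Complex.I * (s : ℂ) * ((min T t : ℝ) : ℂ)))) / (Complex.I * s) * f t := by
  set e : ℝ → ℂ := fun x => Complex.exp (-(Complex.I * (s : ℂ) * (x : ℂ))) with he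
  have hec : Continuous e := by fun_prop
  have hei : IntegrableOn e (Set.Ioc 0 T) :=
    (hec.integrableOn_Icc (a := 0) (b := T)).mono_set Set.Ioc_subset_Icc_self
  have hprod : Integrable (fun p : ℝ × ℝ => e p.1 * f p.2)
      ((volume.restrict (Set.Ioc 0 T)).prod (volume.restrict (Set.Ioi 0))) :=
    Integrable.mul_prod hei hf
  have hS : MeasurableSet {p : ℝ × ℝ | p.1 ≤ p.2} := measurableSet_le measurable_fst measurable_snd
  have hind := hprod.indicator hS
  have hsw := integral_integral_swap (f := fun x t =>
    ({p : ℝ × ℝ | p.1 ≤ p.2}).indicator (fun p : ℝ × ℝ => e p.1 * f p.2) (x, t)) hind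
  rw [intervalIntegral.integral_of_le hT]
  refine Eq.trans ?_ (hsw.trans ?_)
  · refine setIntegral_congr_fun measurableSet_Ioc fun x hx => ?_
    have h1 : ∀ t, ({p : ℝ × ℝ | p.1 ≤ p.2}).indicator (fun p : ℝ × ℝ => e p.1 * f p.2) (x, t)
        = (Set.Ici x).indicator (fun t => e x * f t) t := fun t => by
      simp [Set.indicator_apply]
    simp only [h1]
    rw [setIntegral_indicator measurableSet_Ici, integral_const_mul,
      Set.inter_eq_right.2 (Set.Ici_subset_Ioi.2 hx.1), integral_Ici_eq_integral_Ioi]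
  · refine setIntegral_congr_fun measurableSet_Ioi fun t ht => ?_
    have h1 : ∀ x, ({p : ℝ × ℝ | p.1 ≤ p.2}).indicator (fun p : ℝ × ℝ => e p.1 * f p.2) (x, t)
        = (Set.Iic t).indicator (fun x => e x * f t) x := fun x => by
      simp [Set.indicator_apply]
    simp only [h1]
    rw [setIntegral_indicator measurableSet_Iic, integral_mul_const, Set.Ioc_inter_Iic,
      ← intervalIntegral.integral_of_le (le_min hT (le_of_lt ht)), aux_exp s hs]

/-- Proposition 1(c) (integration by parts identity): for `f` Lebesgue integrable on `(0,∞)`,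
`F₁(x) = ∫_x^∞ f`, and `s ≠ 0`, the improper integral `lim_{T→∞} ∫_0^T e^{-isx} F₁(x) dx`
exists and `is · lim = F₁(0) − ∫_0^∞ e^{-isx} f(x) dx`. -/
theorem stmt4 (f : ℝ → ℂ) (hf : IntegrableOn f (Set.Ioi 0)) (s : ℝ) (hs : s ≠ 0) :
    ∃ L : ℂ,
      Tendsto (fun T : ℝ => ∫ x in (0:ℝ)..T,
          Complex.exp (-(Complex.I * (s : ℂ) * (x : ℂ))) * (∫ t in Set.Ioi x, f t))
        atTop (nhds L) ∧
      Complex.I * (s : ℂ) * L =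
        (∫ t in Set.Ioi (0:ℝ), f t) -
          ∫ x in Set.Ioi (0:ℝ), Complex.exp (-(Complex.I * (s : ℂ) * (x : ℂ))) * f x := by
  have hc : Complex.I * (s : ℂ) ≠ 0 := by simp [hs]
  refine ⟨∫ t in Set.Ioi (0:ℝ),
    (1 - Complex.exp (-(Complex.I * (s : ℂ) * (t : ℂ)))) / (Complex.I * s) * f t, ?_, ?_⟩
  · have key : Tendsto (fun T : ℝ => ∫ t in Set.Ioi (0:ℝ),
      (1 - Complex.exp (-(Complex.I * (s : ℂ) * ((min T t : ℝ) : ℂ)))) / (Complex.I * s) * f t)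
        atTop (nhds (∫ t in Set.Ioi (0:ℝ),
    (1 - Complex.exp (-(Complex.I * (s : ℂ) * (t : ℂ)))) / (Complex.I * s) * f t)) := by
      refine tendsto_integral_filter_of_dominated_convergence
        (fun t => 2 / ‖Complex.I * (s : ℂ)‖ * ‖f t‖) ?_ ?_ (hf.norm.const_mul _) ?_
      · refine Eventually.of_forall fun T => ?_
        refine AEStronglyMeasurable.mul (Continuous.aestronglyMeasurable ?_) hf.aestronglyMeasurable
        fun_prop
      · refine Eventually.of_forall fun T => Eventually.of_forall fun t => ?_
        rw [norm_mul, norm_div]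
        gcongr
        refine (norm_sub_le _ _).trans ?_
        rw [aux_norm]; norm_num
      · refine Eventually.of_forall fun t => tendsto_const_nhds.congr' ?_
        filter_upwards [eventually_ge_atTop t] with T hT
        rw [min_eq_right hT]
    refine key.congr' ?_
    filter_upwards [eventually_ge_atTop 0] with T hT
    exact (aux_fubini f hf s hs T hT).symm
  · have hi : IntegrableOn (fun x : ℝ => Complex.exp (-(Complex.I * (s : ℂ) * (x : ℂ))) * f x)
        (Set.Ioi 0) := by
      refine Integrable.bdd_mul (c := 1) hf (Continuous.aestronglyMeasurable (by fun_prop)) ?_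
      exact Eventually.of_forall fun x => (aux_norm s x).le
    rw [← integral_const_mul, ← integral_sub hf hi]
    refine integral_congr_ae (Eventually.of_forall fun t => ?_)
    simp only
    rw [← mul_assoc, mul_div_cancel₀ _ hc]
    ring
end

section
/- Let f : ℝ → ℂ be locally integrable, s₀ ∈ ℝ and r > 0, and suppose that for every s with |s − s₀| < r the Fourier transform f̂(s) exists; write F(s) for its value. Then F is continuous at s₀ (as a function on the ball {s : |s − s₀| < r}) if and only if F is quasi-uniformly continuous at s₀, meaning: for every ε > 0 and M > 0 there exist m ≥ M and δ > 0 with δ ≤ r such that for all s with |s − s₀| < δ one has |F(s) − ∫_{-m}^{m} e^{-isx} f(x) dx| < ε. -/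
open MeasureTheory Filter

theorem aux_cont_s5 (f : ℝ → ℂ) (hloc : ∀ a b : ℝ, IntegrableOn f (Set.Icc a b)) (m : ℝ) :
    Continuous (fun s : ℝ =>
      ∫ x in (-m)..m, Complex.exp (-(Complex.I * (s : ℂ) * (x : ℂ))) * f x) := by
  have hi : IntervalIntegrable f volume (-m) m := by
    rw [intervalIntegrable_iff]
    exact (hloc _ _).mono_set Set.uIoc_subset_uIcc
  apply intervalIntegral.continuous_of_dominated_interval (bound := fun x => ‖f x‖)
  · intro s
    apply AEStronglyMeasurable.mul
    · apply Continuous.aestronglyMeasurable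
      fun_prop
    · exact (intervalIntegrable_iff.1 hi).aestronglyMeasurable
  · intro s
    refine Eventually.of_forall fun x _ => ?_
    rw [norm_mul, Complex.norm_exp]
    simp
  · exact hi.norm
  · refine Eventually.of_forall fun x _ => ?_
    fun_prop

/-- Theorem 3 (quasi-uniform continuity): if `f̂(s) = F(s)` exists for all `|s - s₀| < r`,
then `F` is continuous at `s₀` iff `F` is quasi-uniformly continuous at `s₀`. -/
theorem stmt5 (f : ℝ → ℂ) (hloc : ∀ a b : ℝ, IntegrableOn f (Set.Icc a b))
    (s₀ r : ℝ) (hr : 0 < r) (F : ℝ → ℂ)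
    (hF : ∀ s : ℝ, |s - s₀| < r → HasFourierHK f s (F s)) :
    ContinuousWithinAt F {s : ℝ | |s - s₀| < r} s₀ ↔
      ∀ ε > (0:ℝ), ∀ M > (0:ℝ), ∃ m ≥ M, ∃ δ > (0:ℝ), δ ≤ r ∧
        ∀ s : ℝ, |s - s₀| < δ →
          ‖F s - ∫ x in (-m)..m, Complex.exp (-(Complex.I * (s : ℂ) * (x : ℂ))) * f x‖ < ε := by
  have hopen : IsOpen {s : ℝ | |s - s₀| < r} := isOpen_lt (by fun_prop) (by fun_prop)
  have hmem : s₀ ∈ {s : ℝ | |s - s₀| < r} := by simpa using hr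
  rw [continuousWithinAt_iff_continuousAt (hopen.mem_nhds hmem)]
  constructor
  · intro hc ε hε M hM
    have h0 := hF s₀ hmem
    unfold HasFourierHK at h0
    have h1 := h0.comp ((tendsto_id (α := ℝ) (x := atTop)).prodMk tendsto_id)
    have h2 := (Metric.tendsto_nhds.1 h1 ε hε).and (eventually_ge_atTop M)
    obtain ⟨m, hm, hmM⟩ := h2.exists
    simp only [Function.comp, id, dist_eq_norm] at hm
    rw [norm_sub_rev] at hm
    have h3 := (hc.sub (aux_cont_s5 f hloc m).continuousAt).norm
    have h4 := h3.eventually_lt_const hm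
    obtain ⟨δ, hδ, h5⟩ := Metric.eventually_nhds_iff.1 h4
    refine ⟨m, hmM, min δ r, lt_min hδ hr, min_le_right _ _, fun s hs => h5 ?_⟩
    rw [Real.dist_eq]
    exact hs.trans_le (min_le_left _ _)
  · intro h
    refine Metric.tendsto_nhds.2 fun ε hε => ?_
    obtain ⟨m, -, δ, hδ, -, h1⟩ := h (ε / 3) (by positivity) 1 one_pos
    have h2 := Metric.tendsto_nhds.1 ((aux_cont_s5 f hloc m).tendsto s₀) (ε / 3) (by positivity)
    filter_upwards [h2, Metric.ball_mem_nhds s₀ hδ] with s hs hb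
    have ha := h1 s (by simpa [Real.dist_eq] using hb)
    have hb := h1 s₀ (by simpa using hδ)
    rw [← dist_eq_norm] at ha hb
    rw [dist_comm] at hb
    have := dist_triangle4 (F s) _ _ (F s₀) |>.trans_lt (add_lt_add (add_lt_add ha hs) hb)
    linarith
end

section
/- Let s₀ ∈ ℝ, let g : ℝ → ℝ have bounded variation on [0,∞) with g(x) → 0 as x → ∞, and let h : ℝ → ℂ be locally integrable on [0,∞). Suppose there are constants M, δ, K > 0 such that for all s with |s − s₀| < δ and all M₂ ≥ M₁ > M one has |∫_{M₁}^{M₂} e^{-isx} h(x) dx| < K. Set f = g·h. Then for every s with |s − s₀| < δ the improper integral F(s) := lim_{T→∞} ∫_0^T e^{-isx} f(x) dx exists, and the function F is continuous at s₀. -/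
open MeasureTheory Filter

lemma aux_layer (u : ℝ → ℝ) (hu : Monotone u) (φ : ℝ → ℂ) (a b c K : ℝ) (hab : a ≤ b)
    (hc : 0 ≤ c) (hK : 0 ≤ K)
    (hφ : IntegrableOn φ (Set.Ioc a b)) (hu0 : ∀ x ∈ Set.Ioc a b, 0 ≤ u x)
    (huc : ∀ x ∈ Set.Ioc a b, u x ≤ c)
    (hb : ∀ y, a ≤ y → y ≤ b → ‖∫ x in y..b, φ x‖ ≤ K) :
    ‖∫ x in Set.Ioc a b, (u x : ℂ) * φ x‖ ≤ K * c := by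
  have key : ∀ x ∈ Set.Ioc a b, (u x : ℂ) * φ x =
      ∫ t in Set.Ioc 0 c, Set.indicator {z : ℝ × ℝ | z.2 < u z.1} (fun z => φ z.1) (x, t) := by
    intro x hx
    have h1 : (fun t => Set.indicator {z : ℝ × ℝ | z.2 < u z.1} (fun z => φ z.1) (x, t))
        = Set.indicator (Set.Iio (u x)) (fun _ => φ x) := by
      ext t; simp [Set.indicator]
    rw [h1, setIntegral_indicator measurableSet_Iio, setIntegral_const]
    have h2 : volume.real (Set.Ioc 0 c ∩ Set.Iio (u x)) = u x := by
      have h3 : volume (Set.Ioc 0 c ∩ Set.Iio (u x)) = volume (Set.Ioo 0 (u x)) := by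
        congr 1
        ext t
        simp only [Set.mem_inter_iff, Set.mem_Ioc, Set.mem_Iio, Set.mem_Ioo]
        have := huc x hx
        constructor
        · rintro ⟨⟨h, _⟩, h'⟩; exact ⟨h, h'⟩
        · rintro ⟨h, h'⟩; exact ⟨⟨h, by linarith⟩, h'⟩
      rw [Measure.real, h3, Real.volume_Ioo, sub_zero, ENNReal.toReal_ofReal (hu0 x hx)]
    rw [h2]; simp
  rw [setIntegral_congr_fun measurableSet_Ioc key]
  have hmeas : MeasurableSet {z : ℝ × ℝ | z.2 < u z.1} :=
    measurableSet_lt measurable_snd (hu.measurable.comp measurable_fst)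
  rw [integral_integral_swap (f := fun x t =>
    Set.indicator {z : ℝ × ℝ | z.2 < u z.1} (fun z => φ z.1) (x, t))]
  · have := norm_setIntegral_le_of_norm_le_const (μ := (volume : Measure ℝ)) (s := Set.Ioc 0 c)
      (f := fun t => ∫ x in Set.Ioc a b,
        Set.indicator {z : ℝ × ℝ | z.2 < u z.1} (fun z => φ z.1) (x, t)) (C := K) (by simp) ?_
    · simpa [Measure.real, hc] using this
    intro t _
    have h1 : (fun x => Set.indicator {z : ℝ × ℝ | z.2 < u z.1} (fun z => φ z.1) (x, t))
        = Set.indicator {x | t < u x} φ := by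
      ext x; simp [Set.indicator]
    have hm : MeasurableSet {x | t < u x} := measurableSet_lt measurable_const hu.measurable
    simp only [h1]
    rw [setIntegral_indicator hm]
    set S := Set.Ioc a b ∩ {x | t < u x} with hS
    rcases S.eq_empty_or_nonempty with he | hne
    · rw [he]; simpa using hK
    have hbd : BddBelow S := ⟨a, fun x hx => hx.1.1.le⟩
    set y := sInf S
    have hay : a ≤ y := le_csInf hne (fun x hx => hx.1.1.le)
    have hyb : y ≤ b := by
      obtain ⟨x, hx⟩ := hne
      exact (csInf_le hbd hx).trans hx.1.2
    have hae : S =ᵐ[volume] Set.Ioc y b := by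
      have e1 : Set.Ioc y b ⊆ S := by
        intro x hx
        obtain ⟨z, hz, hzx⟩ := exists_lt_of_csInf_lt hne hx.1
        exact ⟨⟨hz.1.1.trans hzx, hx.2⟩, lt_of_lt_of_le hz.2 (hu hzx.le)⟩
      have e2 : S ⊆ Set.Icc y b := fun x hx => ⟨csInf_le hbd hx, hx.1.2⟩
      have e3 : Set.Ioc y b =ᵐ[volume] Set.Icc y b := Ioc_ae_eq_Icc
      exact (e2.eventuallyLE.trans e3.symm.le).antisymm e1.eventuallyLE
    rw [setIntegral_congr_set hae, ← intervalIntegral.integral_of_le hyb]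
    exact hb y hay hyb
  · have : Integrable (fun z : ℝ × ℝ => φ z.1)
        ((volume.restrict (Set.Ioc a b)).prod (volume.restrict (Set.Ioc 0 c))) :=
      Integrable.comp_fst hφ _
    exact this.indicator hmeas

lemma aux_mono (p : ℝ → ℝ) (hp : Monotone p) (hp0 : ∀ x, p x ≤ 0) (φ : ℝ → ℂ) (a b K : ℝ)
    (hab : a ≤ b) (hK : 0 ≤ K) (hφ : IntegrableOn φ (Set.Ioc a b))
    (hb : ∀ y, a ≤ y → y ≤ b → ‖∫ x in y..b, φ x‖ ≤ K) :
    ‖∫ x in a..b, (p x : ℂ) * φ x‖ ≤ 2 * K * (-p a) := by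
  have h1 := aux_layer (fun x => p x - p a) (fun x y h => by simpa using hp h) φ a b (-p a) K hab
    (by linarith [hp0 a]) hK hφ (fun x hx => by linarith [hp hx.1.le])
    (fun x hx => by linarith [hp0 x]) hb
  rw [← intervalIntegral.integral_of_le hab] at h1
  have hi : IntervalIntegrable φ volume a b := (intervalIntegrable_iff_integrableOn_Ioc_of_le hab).2 hφ
  have hpi : IntervalIntegrable (fun x => ((p x - p a : ℝ) : ℂ) * φ x) volume a b := by
    rw [intervalIntegrable_iff_integrableOn_Ioc_of_le hab]
    refine Integrable.bdd_mul (c := -p a) hφ ?_ ?_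
    · exact (Complex.measurable_ofReal.comp (hp.measurable.sub_const _)).aestronglyMeasurable
    · refine (ae_restrict_iff' measurableSet_Ioc).2 (Eventually.of_forall fun x hx => ?_)
      rw [Complex.norm_real, Real.norm_of_nonneg (by linarith [hp hx.1.le])]
      linarith [hp0 x]
  have h2 : ∫ x in a..b, (p x : ℂ) * φ x
      = (∫ x in a..b, ((p x - p a : ℝ) : ℂ) * φ x) + (p a : ℂ) * ∫ x in a..b, φ x := by
    rw [← intervalIntegral.integral_const_mul, ← intervalIntegral.integral_add hpi (hi.const_mul _)]
    congr 1; ext x; push_cast; ring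
  rw [h2]
  refine (norm_add_le _ _).trans ?_
  rw [norm_mul, Complex.norm_real, Real.norm_of_nonpos (hp0 a)]
  have := mul_le_mul_of_nonneg_left (hb a le_rfl hab) (by linarith [hp0 a] : 0 ≤ -p a)
  linarith

lemma aux_decomp (g : ℝ → ℝ) (hg : BoundedVariationOn g (Set.Ici 0))
    (hg0 : Tendsto g atTop (nhds 0)) :
    ∃ p q : ℝ → ℝ, Monotone p ∧ Monotone q ∧ Tendsto p atTop (nhds 0) ∧ Tendsto q atTop (nhds 0) ∧
      ∀ x, 0 ≤ x → g x = p x - q x := by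
  have hl := hg.locallyBoundedVariationOn
  have h0 : (0:ℝ) ∈ Set.Ici (0:ℝ) := by simp
  set v := variationOnFromTo g (Set.Ici 0) 0 with hv
  have m1 := variationOnFromTo.monotoneOn hl h0
  have m2 := variationOnFromTo.sub_self_monotoneOn hl h0
  have mm : ∀ x : ℝ, max x 0 ∈ Set.Ici (0:ℝ) := fun x => by simp
  have M1 : Monotone (fun x => v (max x 0)) := fun x y h => m1 (mm x) (mm y) (max_le_max_right 0 h)
  have M2 : Monotone (fun x => (v - g) (max x 0)) :=
    fun x y h => m2 (mm x) (mm y) (max_le_max_right 0 h)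
  have hbd : BddAbove (Set.range (fun x => v (max x 0))) := by
    refine ⟨(eVariationOn g (Set.Ici 0)).toReal, ?_⟩
    rintro _ ⟨x, rfl⟩
    exact (le_abs_self _).trans (variationOnFromTo.abs_le_eVariationOn hg)
  have t1 := tendsto_atTop_ciSup M1 hbd
  set L := ⨆ x, v (max x 0)
  refine ⟨fun x => v (max x 0) - L, fun x => (v - g) (max x 0) - L,
    fun x y h => sub_le_sub_right (M1 h) _, fun x y h => sub_le_sub_right (M2 h) _, ?_, ?_, ?_⟩
  · simpa using t1.sub_const L
  · have := (t1.sub hg0).sub_const L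
    simp only [sub_zero, sub_self] at this
    refine this.congr' ?_
    filter_upwards [eventually_ge_atTop 0] with x hx
    simp [max_eq_left hx]
  · intro x hx
    simp [max_eq_left hx]

theorem stmt6 (s₀ : ℝ) (g : ℝ → ℝ) (h : ℝ → ℂ)
    (hg : BoundedVariationOn g (Set.Ici 0))
    (hg0 : Tendsto g atTop (nhds 0))
    (hh : ∀ a b : ℝ, 0 ≤ a → IntegrableOn h (Set.Icc a b))
    (M δ K : ℝ) (hM : 0 < M) (hδ : 0 < δ) (hK : 0 < K)
    (hbound : ∀ s : ℝ, |s - s₀| < δ → ∀ M₁ M₂ : ℝ, M < M₁ → M₁ ≤ M₂ →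
      ‖∫ x in M₁..M₂, Complex.exp (-(Complex.I * (s : ℂ) * (x : ℂ))) * h x‖ < K) :
    ∃ F : ℝ → ℂ,
      (∀ s : ℝ, |s - s₀| < δ →
        Tendsto (fun T : ℝ => ∫ x in (0:ℝ)..T,
            Complex.exp (-(Complex.I * (s : ℂ) * (x : ℂ))) * (((g x : ℝ) : ℂ) * h x))
          atTop (nhds (F s))) ∧
      ContinuousWithinAt F {s : ℝ | |s - s₀| < δ} s₀ := by
  obtain ⟨p, q, hp, hq, tp, tq, hgpq⟩ := aux_decomp g hg hg0
  have hp0 : ∀ x, p x ≤ 0 := fun x => hp.ge_of_tendsto tp x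
  have hq0 : ∀ x, q x ≤ 0 := fun x => hq.ge_of_tendsto tq x
  have hnorm : ∀ s x : ℝ, ‖Complex.exp (-(Complex.I * (s : ℂ) * (x : ℂ)))‖ = 1 := by
    intro s x
    rw [Complex.norm_exp]; simp
  have hexpI : ∀ (s : ℝ) (k : ℝ → ℂ) (a b : ℝ), IntegrableOn k (Set.Ioc a b) →
      IntegrableOn (fun x : ℝ => Complex.exp (-(Complex.I * (s : ℂ) * (x : ℂ))) * k x)
        (Set.Ioc a b) := by
    intro s k a b hk
    refine Integrable.bdd_mul (c := 1) hk ?_ (Eventually.of_forall fun x => (hnorm s x).le)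
    exact Continuous.aestronglyMeasurable (by fun_prop)
  have hmonI : ∀ (r : ℝ → ℝ), Monotone r → (∀ x, r x ≤ 0) → ∀ (k : ℝ → ℂ) (a b : ℝ),
      IntegrableOn k (Set.Ioc a b) →
      IntegrableOn (fun x : ℝ => (r x : ℂ) * k x) (Set.Ioc a b) := by
    intro r hr hr0 k a b hk
    refine Integrable.bdd_mul (c := -r a) hk ?_ ?_
    · exact (Complex.measurable_ofReal.comp hr.measurable).aestronglyMeasurable
    · refine (ae_restrict_iff' measurableSet_Ioc).2 (Eventually.of_forall fun x hx => ?_)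
      rw [Complex.norm_real, Real.norm_of_nonpos (hr0 x)]
      linarith [hr hx.1.le]
  have hhI : ∀ a b : ℝ, 0 ≤ a → IntegrableOn h (Set.Ioc a b) :=
    fun a b ha => (hh a b ha).mono_set Set.Ioc_subset_Icc_self
  have hfI : ∀ a b : ℝ, 0 ≤ a → IntegrableOn (fun x => ((g x : ℝ) : ℂ) * h x) (Set.Ioc a b) := by
    intro a b ha
    refine IntegrableOn.congr_fun ((hmonI p hp hp0 h a b (hhI a b ha)).sub
      (hmonI q hq hq0 h a b (hhI a b ha))) ?_ measurableSet_Ioc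
    intro x hx
    simp only [Pi.sub_apply]
    rw [hgpq x (ha.trans hx.1.le)]; push_cast; ring
  set G : ℝ → ℝ → ℂ := fun T s => ∫ x in (0:ℝ)..T,
            Complex.exp (-(Complex.I * (s : ℂ) * (x : ℂ))) * (((g x : ℝ) : ℂ) * h x) with hG
  -- tail estimate
  have tail : ∀ s : ℝ, |s - s₀| < δ → ∀ a b : ℝ, M < a → a ≤ b →
      ‖G b s - G a s‖ ≤ 2 * K * (-p a) + 2 * K * (-q a) := by
    intro s hs a b ha hab
    have ha0 : 0 ≤ a := by linarith
    have hii : ∀ c d, 0 ≤ c → c ≤ d → IntervalIntegrable (fun x : ℝ =>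
        Complex.exp (-(Complex.I * (s : ℂ) * (x : ℂ))) * (((g x : ℝ) : ℂ) * h x)) volume c d := by
      intro c d hc hcd
      exact (intervalIntegrable_iff_integrableOn_Ioc_of_le hcd).2 (hexpI s _ c d (hfI c d hc))
    rw [hG]
    simp only
    rw [intervalIntegral.integral_interval_sub_left (hii 0 b le_rfl (by linarith))
      (hii 0 a le_rfl ha0)]
    have hφ := hexpI s h a b (hhI a b ha0)
    have hbb : ∀ y, a ≤ y → y ≤ b →
        ‖∫ x in y..b, Complex.exp (-(Complex.I * (s : ℂ) * (x : ℂ))) * h x‖ ≤ K :=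
      fun y h1 h2 => (hbound s hs y b (by linarith) h2).le
    have e : ∫ x in a..b, Complex.exp (-(Complex.I * (s : ℂ) * (x : ℂ))) * (((g x : ℝ) : ℂ) * h x)
        = (∫ x in a..b, (p x : ℂ) * (Complex.exp (-(Complex.I * (s : ℂ) * (x : ℂ))) * h x))
        - ∫ x in a..b, (q x : ℂ) * (Complex.exp (-(Complex.I * (s : ℂ) * (x : ℂ))) * h x) := by
      rw [← intervalIntegral.integral_sub
        ((intervalIntegrable_iff_integrableOn_Ioc_of_le hab).2 (hmonI p hp hp0 _ a b hφ))
        ((intervalIntegrable_iff_integrableOn_Ioc_of_le hab).2 (hmonI q hq hq0 _ a b hφ))]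
      refine intervalIntegral.integral_congr fun x hx => ?_
      rw [Set.uIcc_of_le hab] at hx
      rw [hgpq x (ha0.trans hx.1)]; push_cast; ring
    rw [e]
    exact (norm_sub_le _ _).trans (add_le_add (aux_mono p hp hp0 _ a b K hab hK.le hφ hbb)
      (aux_mono q hq hq0 _ a b K hab hK.le hφ hbb))
  have tt : Tendsto (fun a => 2 * K * (-p a) + 2 * K * (-q a)) atTop (nhds 0) := by
    simpa using (tp.neg.const_mul (2*K)).add (tq.neg.const_mul (2*K))
  have hUC : UniformCauchySeqOn G atTop {s : ℝ | |s - s₀| < δ} := by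
    rw [Metric.uniformCauchySeqOn_iff]
    intro ε hε
    obtain ⟨N, hN⟩ := eventually_atTop.1
      ((tt.eventually (gt_mem_nhds hε)).and (eventually_gt_atTop M))
    have hN1 := fun a ha => (hN a ha).1
    have hN2 := (hN N le_rfl).2
    refine ⟨N, fun m hm n hn s hs => ?_⟩
    rcases le_total m n with hmn | hmn
    · rw [dist_comm, dist_eq_norm]
      exact (tail s hs m n (by linarith) hmn).trans_lt (hN1 m hm)
    · rw [dist_eq_norm]
      exact (tail s hs n m (by linarith) hmn).trans_lt (hN1 n hn)
  have hlim : ∀ s : ℝ, ∃ l, |s - s₀| < δ → Tendsto (fun T => G T s) atTop (nhds l) := by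
    intro s
    by_cases hs : |s - s₀| < δ
    · have : CauchySeq (fun T => G T s) := by
        rw [Metric.cauchySeq_iff]
        intro ε hε
        obtain ⟨N, hN⟩ := Metric.uniformCauchySeqOn_iff.1 hUC ε hε
        exact ⟨N, fun m hm n hn => hN m hm n hn s hs⟩
      obtain ⟨l, hl⟩ := cauchySeq_tendsto_of_complete this
      exact ⟨l, fun _ => hl⟩
    · exact ⟨0, fun h => absurd h hs⟩
  choose F hF using hlim
  refine ⟨F, hF, ?_⟩
  have hU := hUC.tendstoUniformlyOn_of_tendsto (f := F) (fun s hs => hF s hs)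
  refine hU.continuousOn (Eventually.frequently ?_) s₀ (by simpa using hδ)
  filter_upwards [eventually_ge_atTop 0] with T hT
  refine Continuous.continuousOn ?_
  refine intervalIntegral.continuous_of_dominated_interval
    (bound := fun x => ‖((g x : ℝ) : ℂ) * h x‖) ?_ ?_ ?_ ?_
  · intro s
    rw [Set.uIoc_of_le hT]
    exact (hexpI s _ 0 T (hfI 0 T le_rfl)).aestronglyMeasurable
  · intro s
    refine Eventually.of_forall fun x _ => ?_
    rw [norm_mul, hnorm, one_mul]
  · exact ((intervalIntegrable_iff_integrableOn_Ioc_of_le hT).2 (hfI 0 T le_rfl)).norm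
  · refine Eventually.of_forall fun x _ => ?_
    fun_prop
end

section
/- Let s₀ ∈ ℝ, let g : ℝ → ℝ have bounded variation on [0,∞), and let h : ℝ → ℂ be locally integrable on [0,∞). For s ∈ ℝ and x ≥ 0 set H_s(x) = ∫_0^x e^{-ist} h(t) dt. Suppose there are δ, K > 0 such that: (i) for every s with |s − s₀| < δ the improper integral ĥ(s) := lim_{T→∞} ∫_0^T e^{-isx} h(x) dx exists and the function s ↦ ĥ(s) is continuous at s₀; and (ii) |H_s(x)| ≤ K for all x ≥ 0 and all s with |s − s₀| < δ. Then for every s with |s − s₀| < δ the improper integral F(s) := lim_{T→∞} ∫_0^T e^{-isx} g(x) h(x) dx exists, and F is continuous at s₀. -/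
open MeasureTheory Filter

lemma abel_aux (p : ℝ → ℝ) (hp : Monotone p) (f : ℝ → ℂ) (a b M : ℝ) (hab : a ≤ b)
    (hf : IntegrableOn f (Set.Ioc a b))
    (hM : ∀ x, a ≤ x → x ≤ b → ‖∫ t in a..x, f t‖ ≤ M) :
    ‖∫ x in a..b, ((p b - p x : ℝ) : ℂ) * f x‖ ≤ M * (p b - p a) := by
  have hpab := hp hab
  let φ : ℝ → ℝ → ℂ := fun x u => {z : ℝ × ℝ | p z.1 < z.2}.indicator (fun z => f z.1) (x, u)
  have hS : MeasurableSet {z : ℝ × ℝ | p z.1 < z.2} :=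
    measurableSet_lt (hp.measurable.comp measurable_fst) measurable_snd
  have hint : Integrable (Function.uncurry φ)
      ((volume.restrict (Set.Ioc a b)).prod (volume.restrict (Set.Ioc (p a) (p b)))) := by
    have h1 : Integrable (fun z : ℝ × ℝ => f z.1)
      ((volume.restrict (Set.Ioc a b)).prod (volume.restrict (Set.Ioc (p a) (p b)))) :=
      Integrable.comp_fst hf _
    exact h1.indicator hS
  have e1 : ∫ x in a..b, ((p b - p x : ℝ) : ℂ) * f x
      = ∫ x in Set.Ioc a b, ∫ u in Set.Ioc (p a) (p b), φ x u := by
    rw [intervalIntegral.integral_of_le hab]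
    refine setIntegral_congr_fun measurableSet_Ioc (fun x hx => ?_)
    have hx1 := hp hx.1.le
    have hx2 := hp hx.2
    have : ∀ u, φ x u = (Set.Ioi (p x)).indicator (fun _ => f x) u := by
      intro u
      simp [φ, Set.indicator_apply]
    simp only [this]
    rw [setIntegral_indicator measurableSet_Ioi]
    have : Set.Ioc (p a) (p b) ∩ Set.Ioi (p x) = Set.Ioc (p x) (p b) := by
      ext u
      simp only [Set.mem_inter_iff, Set.mem_Ioc, Set.mem_Ioi]
      constructor
      · rintro ⟨⟨_, h⟩, h'⟩; exact ⟨h', h⟩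
      · rintro ⟨h, h'⟩; exact ⟨⟨by linarith, h'⟩, h⟩
    rw [this]
    simp [hx2]
  rw [e1, integral_integral_swap hint]
  have key : ∀ u ∈ Set.Ioc (p a) (p b), ‖∫ x in Set.Ioc a b, φ x u‖ ≤ M := by
    intro u hu
    have h1 : ∀ x, φ x u = {x | p x < u}.indicator f x := by
      intro x
      simp [φ, Set.indicator_apply]
    simp only [h1]
    rw [setIntegral_indicator (measurableSet_lt hp.measurable measurable_const)]
    have hbdd : BddAbove (Set.Icc a b ∩ {x | p x < u}) := ⟨b, fun x hx => hx.1.2⟩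
    have hane : a ∈ Set.Icc a b ∩ {x | p x < u} := ⟨⟨le_rfl, hab⟩, hu.1⟩
    set c := sSup (Set.Icc a b ∩ {x | p x < u}) with hc
    have hac : a ≤ c := le_csSup hbdd hane
    have hcb : c ≤ b := csSup_le ⟨a, hane⟩ (fun x hx => hx.1.2)
    have hae : (Set.Ioc a b ∩ {x | p x < u} : Set ℝ) =ᵐ[volume] Set.Ioc a c := by
      have hn : ∀ᵐ x ∂(volume : Measure ℝ), x ≠ c := by
        simp [ae_iff]
      filter_upwards [hn] with x hx
      apply propext
      change (x ∈ Set.Ioc a b ∩ {x | p x < u}) ↔ x ∈ Set.Ioc a c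
      constructor
      · rintro ⟨h1, h2⟩
        exact ⟨h1.1, le_csSup hbdd ⟨⟨h1.1.le, h1.2⟩, h2⟩⟩
      · rintro ⟨h1, h2⟩
        have h3 : x < c := lt_of_le_of_ne h2 hx
        obtain ⟨y, hy, hxy⟩ := exists_lt_of_lt_csSup ⟨a, hane⟩ h3
        exact ⟨⟨h1, h2.trans hcb⟩, lt_of_le_of_lt (hp hxy.le) hy.2⟩
    rw [setIntegral_congr_set hae, ← intervalIntegral.integral_of_le hac]
    exact hM c hac hcb
  refine (norm_setIntegral_le_of_norm_le_const (by simp) key).trans ?_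
  simp [hpab]

lemma mono_case (s₀ : ℝ) (g : ℝ → ℝ) (h : ℝ → ℂ)
    (hg : Monotone g) (C : ℝ) (hC : ∀ x, |g x| ≤ C)
    (hh : ∀ a b : ℝ, 0 ≤ a → IntegrableOn h (Set.Icc a b))
    (δ K : ℝ) (hδ : 0 < δ) (hK : 0 < K)
    (G : ℝ → ℂ)
    (hG : ∀ s : ℝ, |s - s₀| < δ →
      Tendsto (fun T : ℝ => ∫ x in (0:ℝ)..T,
          Complex.exp (-(Complex.I * (s : ℂ) * (x : ℂ))) * h x) atTop (nhds (G s)))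
    (hGcont : ContinuousWithinAt G {s : ℝ | |s - s₀| < δ} s₀)
    (hH : ∀ s : ℝ, |s - s₀| < δ → ∀ x : ℝ, 0 ≤ x →
      ‖∫ t in (0:ℝ)..x, Complex.exp (-(Complex.I * (s : ℂ) * (t : ℂ))) * h t‖ ≤ K) :
    (∀ s a b : ℝ, 0 ≤ a → a ≤ b → IntervalIntegrable (fun x : ℝ =>
      Complex.exp (-(Complex.I * (s : ℂ) * (x : ℂ))) * (((g x : ℝ) : ℂ) * h x)) volume a b) ∧
    ∃ F : ℝ → ℂ,
      (∀ s : ℝ, |s - s₀| < δ →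
        Tendsto (fun T : ℝ => ∫ x in (0:ℝ)..T,
            Complex.exp (-(Complex.I * (s : ℂ) * (x : ℂ))) * (((g x : ℝ) : ℂ) * h x))
          atTop (nhds (F s))) ∧
      ContinuousWithinAt F {s : ℝ | |s - s₀| < δ} s₀ := by
  have hnorm : ∀ s x : ℝ, ‖Complex.exp (-(Complex.I * (s : ℂ) * (x : ℂ)))‖ = 1 := by
    intro s x
    rw [Complex.norm_exp]; simp
  have hhI : ∀ a b : ℝ, 0 ≤ a → a ≤ b → IntervalIntegrable h volume a b := fun a b ha hab =>
    (intervalIntegrable_iff_integrableOn_Ioc_of_le hab).2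
      ((hh a b ha).mono_set Set.Ioc_subset_Icc_self)
  have hec : ∀ s : ℝ, Continuous fun x : ℝ => Complex.exp (-(Complex.I * (s : ℂ) * (x : ℂ))) := by
    intro s; fun_prop
  have hfI : ∀ s a b : ℝ, 0 ≤ a → a ≤ b → IntervalIntegrable (fun x : ℝ =>
      Complex.exp (-(Complex.I * (s : ℂ) * (x : ℂ))) * h x) volume a b := fun s a b ha hab =>
    (hhI a b ha hab).continuousOn_mul (hec s).continuousOn
  have hghI : ∀ a b : ℝ, 0 ≤ a → a ≤ b → IntervalIntegrable
      (fun x => ((g x : ℝ) : ℂ) * h x) volume a b := by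
    intro a b ha hab
    have h1 := hhI a b ha hab
    rw [intervalIntegrable_iff] at h1 ⊢
    refine Integrable.bdd_mul (c := C) h1 ?_ ?_
    · exact (Complex.measurable_ofReal.comp hg.measurable).aestronglyMeasurable
    · filter_upwards with x
      simpa using hC x
  have hgfI : ∀ s a b : ℝ, 0 ≤ a → a ≤ b → IntervalIntegrable (fun x : ℝ =>
      Complex.exp (-(Complex.I * (s : ℂ) * (x : ℂ))) * (((g x : ℝ) : ℂ) * h x)) volume a b :=
    fun s a b ha hab => (hghI a b ha hab).continuousOn_mul (hec s).continuousOn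
  refine ⟨hgfI, ?_⟩
  have hcont : ∀ (k : ℝ → ℂ) (T : ℝ), IntervalIntegrable k volume 0 T →
      Continuous fun s : ℝ => ∫ x in (0:ℝ)..T,
        Complex.exp (-(Complex.I * (s : ℂ) * (x : ℂ))) * k x := by
    intro k T hk
    refine intervalIntegral.continuous_of_dominated_interval (bound := fun x => ‖k x‖) ?_ ?_ ?_ ?_
    · intro s
      exact (hk.continuousOn_mul (hec s).continuousOn).def'.aestronglyMeasurable
    · intro s
      filter_upwards with x _
      rw [norm_mul, hnorm, one_mul]
    · exact hk.norm
    · filter_upwards with x _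
      fun_prop
  set H : ℝ → ℝ → ℂ := fun s T => ∫ x in (0:ℝ)..T,
          Complex.exp (-(Complex.I * (s : ℂ) * (x : ℂ))) * h x with hHdef
  set J : ℝ → ℝ → ℂ := fun s T => ∫ x in (0:ℝ)..T,
          Complex.exp (-(Complex.I * (s : ℂ) * (x : ℂ))) * (((g x : ℝ) : ℂ) * h x) with hJdef
  let D : ℝ → ℝ → ℂ := fun s T => J s T - (g T : ℂ) * H s T
  have hbddg : BddAbove (Set.range g) :=
    ⟨C, by rintro _ ⟨x, rfl⟩; exact (abs_le.1 (hC x)).2⟩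
  obtain ⟨L, hL⟩ : ∃ L, Tendsto g atTop (nhds L) := ⟨_, tendsto_atTop_ciSup hg hbddg⟩
  have hgL : ∀ x, g x ≤ L := fun x => hg.ge_of_tendsto hL x
  have hD : ∀ s, |s - s₀| < δ → ∀ a b, 0 ≤ a → a ≤ b →
      ‖D s b - D s a‖ ≤ 3 * K * (g b - g a) := by
    intro s hs a b ha hab
    have hb : 0 ≤ b := ha.trans hab
    have hHab : ∀ x, a ≤ x → ∫ t in a..x, Complex.exp (-(Complex.I * (s : ℂ) * (t : ℂ))) * h t
        = H s x - H s a := by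
      intro x hx
      rw [hHdef, eq_sub_iff_add_eq, add_comm]
      exact intervalIntegral.integral_add_adjacent_intervals (hfI s 0 a le_rfl ha)
        (hfI s a x ha hx)
    have hJab : ∫ t in a..b, Complex.exp (-(Complex.I * (s : ℂ) * (t : ℂ))) * (((g t : ℝ) : ℂ) * h t)
        = J s b - J s a := by
      rw [hJdef, eq_sub_iff_add_eq, add_comm]
      exact intervalIntegral.integral_add_adjacent_intervals (hgfI s 0 a le_rfl ha)
        (hgfI s a b ha hab)
    have h1 := abel_aux g hg (fun x : ℝ => Complex.exp (-(Complex.I * (s : ℂ) * (x : ℂ))) * h x)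
      a b (2 * K) hab ((intervalIntegrable_iff_integrableOn_Ioc_of_le hab).1 (hfI s a b ha hab))
      (by
        intro x hax hxb
        rw [hHab x hax]
        refine (norm_sub_le _ _).trans ?_
        linarith [hH s hs x (ha.trans hax), hH s hs a ha])
    have h2 : ∫ x in a..b, ((g b - g x : ℝ) : ℂ) *
        (Complex.exp (-(Complex.I * (s : ℂ) * (x : ℂ))) * h x)
        = (g b : ℂ) * (H s b - H s a) - (J s b - J s a) := by
      rw [← hHab b hab, ← hJab, ← intervalIntegral.integral_const_mul,
        ← intervalIntegral.integral_sub ((hfI s a b ha hab).const_mul _) (hgfI s a b ha hab)]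
      refine intervalIntegral.integral_congr (fun x _ => ?_)
      push_cast
      ring
    rw [h2] at h1
    have h3 : D s b - D s a = -((g b : ℂ) * (H s b - H s a) - (J s b - J s a))
        - ((g b - g a : ℝ) : ℂ) * H s a := by
      simp only [D]; push_cast; ring
    rw [h3]
    refine (norm_sub_le _ _).trans ?_
    rw [norm_neg, norm_mul, Complex.norm_real, Real.norm_of_nonneg (sub_nonneg.2 (hg hab))]
    have h4 := mul_le_mul_of_nonneg_left (hH s hs a ha) (sub_nonneg.2 (hg hab))
    have h5 : (g b - g a) * ‖H s a‖ ≤ (g b - g a) * K := h4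
    linarith
  have hsmall : ∀ ε > 0, ∀ᶠ T in atTop, 0 ≤ T ∧ 3 * K * (L - g T) < ε := by
    intro ε hε
    have : Tendsto (fun T => 3 * K * (L - g T)) atTop (nhds (3 * K * (L - L))) :=
      (tendsto_const_nhds.sub hL).const_mul _
    rw [sub_self, mul_zero] at this
    exact (eventually_ge_atTop 0).and (this.eventually (gt_mem_nhds hε))
  have hlim : ∀ s, ∃ E, |s - s₀| < δ → Tendsto (D s) atTop (nhds E) := by
    intro s
    by_cases hs : |s - s₀| < δ
    · have : CauchySeq (D s) := by
        rw [Metric.cauchySeq_iff']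
        intro ε hε
        obtain ⟨N, hN0, hN⟩ := (hsmall ε hε).exists
        refine ⟨N, fun n hn => ?_⟩
        rw [dist_eq_norm]
        refine (hD s hs N n hN0 hn).trans_lt (lt_of_le_of_lt ?_ hN)
        have := hgL n
        gcongr
      obtain ⟨E, hE⟩ := cauchySeq_tendsto_of_complete this
      exact ⟨E, fun _ => hE⟩
    · exact ⟨0, fun h => absurd h hs⟩
  choose E hE using hlim
  have hunif : TendstoUniformlyOn (fun T s => D s T) E atTop {s : ℝ | |s - s₀| < δ} := by
    rw [Metric.tendstoUniformlyOn_iff]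
    intro ε hε
    filter_upwards [hsmall ε hε] with T hT s hs
    rw [dist_eq_norm]
    refine lt_of_le_of_lt ?_ hT.2
    refine le_of_tendsto ((hE s hs).sub_const (D s T)).norm ?_
    filter_upwards [eventually_ge_atTop T] with b hb
    refine (hD s hs T b hT.1 hb).trans ?_
    have := hgL b
    gcongr
  have hEc : ContinuousOn E {s : ℝ | |s - s₀| < δ} := by
    refine hunif.continuousOn (Eventually.frequently ?_)
    filter_upwards [eventually_ge_atTop 0] with T hT
    exact ((hcont _ T (hghI 0 T le_rfl hT)).sub
      (continuous_const.mul (hcont _ T (hhI 0 T le_rfl hT)))).continuousOn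
  refine ⟨fun s => E s + (L : ℂ) * G s, fun s hs => ?_, ?_⟩
  · have h1 := (hE s hs).add (((Complex.continuous_ofReal.tendsto L).comp hL).mul (hG s hs))
    refine h1.congr (fun T => ?_)
    exact sub_add_cancel (J s T) ((g T : ℂ) * H s T)
  · exact (hEc s₀ (by simpa using hδ)).add (continuousWithinAt_const.mul hGcont)

/-- Proposition 3(b) (Abel type test for continuity): with `g` of bounded variation on
`[0,∞)`, `h` locally integrable on `[0,∞)`, `ĥ` existing near `s₀` and continuous at `s₀`,
and the partial integrals `H_s(x) = ∫_0^x e^{-ist} h(t) dt` uniformly bounded, the transform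
`F(s) = lim_{T→∞} ∫_0^T e^{-isx} g(x) h(x) dx` exists near `s₀` and is continuous at `s₀`. -/
theorem stmt7 (s₀ : ℝ) (g : ℝ → ℝ) (h : ℝ → ℂ)
    (hg : BoundedVariationOn g (Set.Ici 0))
    (hh : ∀ a b : ℝ, 0 ≤ a → IntegrableOn h (Set.Icc a b))
    (δ K : ℝ) (hδ : 0 < δ) (hK : 0 < K)
    (G : ℝ → ℂ)
    (hG : ∀ s : ℝ, |s - s₀| < δ →
      Tendsto (fun T : ℝ => ∫ x in (0:ℝ)..T,
          Complex.exp (-(Complex.I * (s : ℂ) * (x : ℂ))) * h x) atTop (nhds (G s)))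
    (hGcont : ContinuousWithinAt G {s : ℝ | |s - s₀| < δ} s₀)
    (hH : ∀ s : ℝ, |s - s₀| < δ → ∀ x : ℝ, 0 ≤ x →
      ‖∫ t in (0:ℝ)..x, Complex.exp (-(Complex.I * (s : ℂ) * (t : ℂ))) * h t‖ ≤ K) :
    ∃ F : ℝ → ℂ,
      (∀ s : ℝ, |s - s₀| < δ →
        Tendsto (fun T : ℝ => ∫ x in (0:ℝ)..T,
            Complex.exp (-(Complex.I * (s : ℂ) * (x : ℂ))) * (((g x : ℝ) : ℂ) * h x))
          atTop (nhds (F s))) ∧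
      ContinuousWithinAt F {s : ℝ | |s - s₀| < δ} s₀ := by

  have hl := hg.locallyBoundedVariationOn
  have h0 : (0:ℝ) ∈ Set.Ici (0:ℝ) := Set.mem_Ici.2 le_rfl
  let v := variationOnFromTo g (Set.Ici 0) 0
  let p : ℝ → ℝ := fun x => v (max 0 x)
  let q : ℝ → ℝ := fun x => (v - g) (max 0 x)
  have hm : ∀ x : ℝ, max 0 x ∈ Set.Ici (0:ℝ) := fun x => Set.mem_Ici.2 (le_max_left _ _)
  have hp : Monotone p := fun x y hxy =>
    variationOnFromTo.monotoneOn hl h0 (hm x) (hm y) (max_le_max le_rfl hxy)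
  have hq : Monotone q := fun x y hxy =>
    variationOnFromTo.sub_self_monotoneOn hl h0 (hm x) (hm y) (max_le_max le_rfl hxy)
  have hvb : ∀ x, |v x| ≤ (eVariationOn g (Set.Ici 0)).toReal := fun x =>
    variationOnFromTo.abs_le_eVariationOn hg
  have hqb : ∀ x, |q x| ≤ 2 * (eVariationOn g (Set.Ici 0)).toReal + |g 0| := by
    intro x
    have h1 := hvb (max 0 x)
    have h2 := hg.dist_le (hm x) h0
    rw [Real.dist_eq] at h2
    have h3 : q x = v (max 0 x) - (g (max 0 x) - g 0) - g 0 := by simp only [q, Pi.sub_apply]; ring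
    rw [h3]
    refine (abs_sub _ _).trans ?_
    have := abs_sub (v (max 0 x)) (g (max 0 x) - g 0)
    linarith
  obtain ⟨ip, Fp, hFp, hFpc⟩ := mono_case s₀ p h hp _ (fun x => hvb _) hh δ K hδ hK G hG hGcont hH
  obtain ⟨iq, Fq, hFq, hFqc⟩ := mono_case s₀ q h hq _ hqb hh δ K hδ hK G hG hGcont hH
  refine ⟨fun s => Fp s - Fq s, fun s hs => ?_, hFpc.sub hFqc⟩
  refine ((hFp s hs).sub (hFq s hs)).congr' ?_
  filter_upwards [eventually_ge_atTop 0] with T hT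
  rw [← intervalIntegral.integral_sub (ip s 0 T le_rfl hT) (iq s 0 T le_rfl hT)]
  refine intervalIntegral.integral_congr (fun x hx => ?_)
  rw [Set.uIcc_of_le hT] at hx
  simp only [p, q, max_eq_right hx.1, Pi.sub_apply]
  push_cast
  ring
end

section
/- Let f : ℝ → ℂ be locally integrable, let α < β, and suppose that for every s ∈ [α,β] the Fourier transform f̂(s) exists; write F(s) for its value. Suppose also that g(x) := x·f(x) is Lebesgue integrable on ℝ, and let ĝ(s) = ∫_{-∞}^{∞} e^{-isx} x f(x) dx be its (Lebesgue) Fourier transform. Then for every s ∈ (α,β), F is differentiable at s with F′(s) = −i·ĝ(s). -/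
open MeasureTheory Filter

/-- Proposition 5 (frequency differentiation): if `f̂ = F` exists on `[α,β]` and
`g(x) = x f(x)` is Lebesgue integrable on `ℝ`, then `F′(s) = −i ĝ(s)` on `(α,β)`. -/
theorem stmt9 (f : ℝ → ℂ) (hloc : ∀ a b : ℝ, IntegrableOn f (Set.Icc a b))
    (α β : ℝ) (hαβ : α < β) (F : ℝ → ℂ)
    (hF : ∀ s ∈ Set.Icc α β, HasFourierHK f s (F s))
    (hg : Integrable (fun x : ℝ => (x : ℂ) * f x)) :
    ∀ s ∈ Set.Ioo α β,
      HasDerivWithinAt F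
        (-Complex.I * ∫ x : ℝ, Complex.exp (-(Complex.I * (s : ℂ) * (x : ℂ))) * ((x : ℂ) * f x))
        (Set.Icc α β) s := by
  have hlocI : LocallyIntegrable f := by
    rw [locallyIntegrable_iff]
    intro K hK
    obtain ⟨r, hr⟩ := hK.isBounded.subset_closedBall 0
    rw [Real.closedBall_eq_Icc] at hr
    exact (hloc _ _).mono_set hr
  have hmeas : AEStronglyMeasurable f volume := hlocI.aestronglyMeasurable
  have hfI : Integrable f := by
    have h1 : Integrable ((Set.Icc (-1:ℝ) 1).indicator f) :=
      (hloc (-1) 1).integrable_indicator measurableSet_Icc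
    refine (h1.norm.add hg.norm).mono' hmeas (Eventually.of_forall fun x => ?_)
    simp only [Pi.add_apply]
    by_cases hx : x ∈ Set.Icc (-1:ℝ) 1
    · rw [Set.indicator_of_mem hx]
      linarith [norm_nonneg ((x:ℂ) * f x)]
    · rw [Set.indicator_of_notMem hx, norm_mul, Complex.norm_real, Real.norm_eq_abs]
      have : 1 ≤ |x| := by
        by_contra h
        push Not at h
        exact hx ⟨(abs_lt.1 h).1.le, (abs_lt.1 h).2.le⟩
      simp only [norm_zero, zero_add]
      nlinarith [norm_nonneg (f x)]
  have hexp : ∀ s x : ℝ, ‖Complex.exp (-(Complex.I * (s : ℂ) * (x : ℂ)))‖ = 1 := by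
    intro s x
    rw [Complex.norm_exp]
    simp
  have hcont : ∀ s : ℝ, Continuous fun x : ℝ => Complex.exp (-(Complex.I * (s : ℂ) * (x : ℂ))) := by
    intro s
    fun_prop
  have hint : ∀ (s : ℝ) (h : ℝ → ℂ), Integrable h →
      Integrable fun x : ℝ => Complex.exp (-(Complex.I * (s : ℂ) * (x : ℂ))) * h x := by
    intro s h hh
    refine hh.norm.mono' ((hcont s).aestronglyMeasurable.mul hh.1)
      (Eventually.of_forall fun x => ?_)
    rw [norm_mul, hexp, one_mul]
  have hFeq : ∀ s ∈ Set.Icc α β,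
      F s = ∫ x : ℝ, Complex.exp (-(Complex.I * (s : ℂ) * (x : ℂ))) * f x := by
    intro s hs
    refine tendsto_nhds_unique (hF s hs) ?_
    exact intervalIntegral_tendsto_integral (hint s f hfI)
      (tendsto_neg_atTop_atBot.comp tendsto_fst) tendsto_snd
  intro s hs
  have key := (hasDerivAt_integral_of_dominated_loc_of_deriv_le (μ := volume) (𝕜 := ℝ)
    (F := fun (s x : ℝ) => Complex.exp (-(Complex.I * (s : ℂ) * (x : ℂ))) * f x)
    (F' := fun (s x : ℝ) => -Complex.I *
      (Complex.exp (-(Complex.I * (s : ℂ) * (x : ℂ))) * ((x : ℂ) * f x)))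
    (x₀ := s) (s := Set.univ) (bound := fun x : ℝ => ‖(x : ℂ) * f x‖) univ_mem
    (Eventually.of_forall fun t => (hint t f hfI).1) (hint s f hfI)
    ((hint s _ hg).const_mul _).1
    (Eventually.of_forall fun (x : ℝ) (t : ℝ) _ => by
      rw [norm_mul, norm_mul, hexp]; simp)
    hg.norm
    (Eventually.of_forall fun (x : ℝ) (t : ℝ) _ => by
      have h1 : HasDerivAt (fun t : ℝ => (t : ℂ)) 1 t := Complex.ofRealCLM.hasDerivAt
      have h2 := ((((h1.const_mul Complex.I).mul_const (x : ℂ)).neg).cexp).mul_const (f x)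
      refine h2.congr_deriv ?_
      simp only [Pi.neg_apply]
      ring)).2
  rw [integral_const_mul] at key
  exact key.hasDerivWithinAt.congr hFeq (hFeq s (Set.Ioo_subset_Icc_self hs))
end

section
/- Let f : ℝ → ℂ and f′ : ℝ → ℂ be such that f′ is locally integrable, f(y) − f(x) = ∫_x^y f′(t) dt for all real x ≤ y, and f(x) → 0 as x → ∞ and as x → −∞. Then for every s ≠ 0: the Fourier transform (f′)^(s) exists if and only if the Fourier transform f̂(s) exists, and when they exist, (f′)^(s) = i s · f̂(s). -/
open MeasureTheory Filter

theorem aux_triangle (g h : ℝ → ℂ) (a b : ℝ) (hab : a ≤ b)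
    (hg : IntegrableOn g (Set.Ioc a b)) (hh : IntegrableOn h (Set.Ioc a b)) :
    ∫ x in a..b, g x * ∫ t in x..b, h t = ∫ t in a..b, h t * ∫ x in a..t, g x := by
  have hS : MeasurableSet {p : ℝ × ℝ | p.1 ≤ p.2} := measurableSet_le measurable_fst measurable_snd
  have hint := (Integrable.mul_prod hg hh).indicator hS
  have key := integral_integral_swap
    (f := fun x t => {p : ℝ × ℝ | p.1 ≤ p.2}.indicator (fun z : ℝ × ℝ => g z.1 * h z.2) (x, t)) hint
  rw [intervalIntegral.integral_of_le hab, intervalIntegral.integral_of_le hab]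
  have e1 : ∀ x ∈ Set.Ioc a b, (g x * ∫ t in x..b, h t) = ∫ t in Set.Ioc a b,
      {p : ℝ × ℝ | p.1 ≤ p.2}.indicator (fun z : ℝ × ℝ => g z.1 * h z.2) (x, t) := by
    intro x hx
    have : ∀ t, {p : ℝ × ℝ | p.1 ≤ p.2}.indicator (fun z : ℝ × ℝ => g z.1 * h z.2) (x, t)
        = (Set.Ici x).indicator (fun t => g x * h t) t := by
      intro t; simp [Set.indicator_apply]
    simp_rw [this]
    rw [setIntegral_indicator measurableSet_Ici]
    have hs : Set.Ioc a b ∩ Set.Ici x = Set.Icc x b := by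
      ext t; simp only [Set.mem_inter_iff, Set.mem_Ioc, Set.mem_Ici, Set.mem_Icc]
      exact ⟨fun h => ⟨h.2, h.1.2⟩, fun h => ⟨⟨hx.1.trans_le h.1, h.2⟩, h.1⟩⟩
    rw [hs, integral_Icc_eq_integral_Ioc, intervalIntegral.integral_of_le hx.2,
      integral_const_mul]
  have e2 : ∀ t ∈ Set.Ioc a b, (h t * ∫ x in a..t, g x) = ∫ x in Set.Ioc a b,
      {p : ℝ × ℝ | p.1 ≤ p.2}.indicator (fun z : ℝ × ℝ => g z.1 * h z.2) (x, t) := by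
    intro t ht
    have : ∀ x, {p : ℝ × ℝ | p.1 ≤ p.2}.indicator (fun z : ℝ × ℝ => g z.1 * h z.2) (x, t)
        = (Set.Iic t).indicator (fun x => g x * h t) x := by
      intro x; simp [Set.indicator_apply]
    simp_rw [this]
    rw [setIntegral_indicator measurableSet_Iic]
    have hs : Set.Ioc a b ∩ Set.Iic t = Set.Ioc a t := by
      ext x; simp only [Set.mem_inter_iff, Set.mem_Ioc, Set.mem_Iic]
      exact ⟨fun h => ⟨h.1.1, h.2⟩, fun h => ⟨⟨h.1, h.2.trans ht.2⟩, h.2⟩⟩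
    rw [hs, intervalIntegral.integral_of_le ht.1.le, integral_mul_const, mul_comm]
  rw [setIntegral_congr_fun measurableSet_Ioc e1, setIntegral_congr_fun measurableSet_Ioc e2]
  exact key

theorem aux_parts (f f' : ℝ → ℂ)
    (hloc : ∀ a b : ℝ, IntegrableOn f' (Set.Icc a b))
    (hftc : ∀ x y : ℝ, x ≤ y → f y - f x = ∫ t in x..y, f' t)
    (e e' : ℝ → ℂ) (he : ∀ x, HasDerivAt e (e' x) x) (he' : Continuous e')
    (a b : ℝ) (hab : a ≤ b) :
    ∫ x in a..b, e x * f' x = e b * f b - e a * f a - ∫ x in a..b, e' x * f x := by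
  have hi : ∀ a b : ℝ, IntervalIntegrable f' volume a b := fun a b =>
    intervalIntegrable_iff.2 ((hloc _ _).mono_set Set.uIoc_subset_uIcc)
  have hf : Continuous f := by
    have h1 : ∀ t, f t = f 0 + ∫ x in (0:ℝ)..t, f' x := by
      intro t
      rcases le_total 0 t with h | h
      · rw [← hftc 0 t h]; ring
      · rw [intervalIntegral.integral_symm, ← hftc t 0 h]; ring
    rw [funext h1]
    exact continuous_const.add (intervalIntegral.continuous_primitive hi 0)
  have hec : Continuous e := continuous_iff_continuousAt.2 fun x => (he x).continuousAt
  have hfe : ∀ x y, ∫ t in x..y, e' t = e y - e x := fun x y =>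
    intervalIntegral.integral_eq_sub_of_hasDerivAt (fun t _ => he t) (he'.intervalIntegrable _ _)
  have key := aux_triangle f' e' a b hab ((hloc a b).mono_set Set.Ioc_subset_Icc_self)
    (he'.integrableOn_Icc.mono_set Set.Ioc_subset_Icc_self)
  simp_rw [hfe] at key
  have r : ∫ t in a..b, e' t * ∫ x in a..t, f' x = ∫ t in a..b, (e' t * f t - e' t * f a) := by
    apply intervalIntegral.integral_congr
    intro t ht
    rw [Set.uIcc_of_le hab] at ht
    simp only
    rw [← hftc a t ht.1]; ring
  have l : ∫ x in a..b, f' x * (e b - e x) = ∫ x in a..b, (f' x * e b - e x * f' x) := by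
    congr 1; ext x; ring
  rw [r, l, intervalIntegral.integral_sub ((hi a b).mul_const _)
      ((hi a b).continuousOn_mul hec.continuousOn),
    intervalIntegral.integral_sub ((he'.fun_mul hf).intervalIntegrable _ _)
      ((he'.fun_mul continuous_const).intervalIntegrable _ _),
    intervalIntegral.integral_mul_const, intervalIntegral.integral_mul_const, hfe,
    ← hftc a b hab] at key
  linear_combination -key

/-- Proposition 6(a) (time differentiation): if `f` is an indefinite integral of `f′`
with limit `0` at `±∞`, then for `s ≠ 0`, `(f′)^(s)` exists iff `f̂(s)` exists, and then
`(f′)^(s) = i s f̂(s)`. -/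
theorem stmt10 (f f' : ℝ → ℂ)
    (hloc : ∀ a b : ℝ, IntegrableOn f' (Set.Icc a b))
    (hftc : ∀ x y : ℝ, x ≤ y → f y - f x = ∫ t in x..y, f' t)
    (hlim₁ : Tendsto f atTop (nhds 0)) (hlim₂ : Tendsto f atBot (nhds 0)) :
    ∀ s : ℝ, s ≠ 0 →
      ((∃ L : ℂ, HasFourierHK f' s L) ↔ (∃ L : ℂ, HasFourierHK f s L)) ∧
      (∀ L M : ℂ, HasFourierHK f' s L → HasFourierHK f s M →
        L = Complex.I * (s : ℂ) * M) := by
  intro s hs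
  have hc : Complex.I * (s : ℂ) ≠ 0 := mul_ne_zero Complex.I_ne_zero (by exact_mod_cast hs)
  set E : ℝ → ℂ := fun x => Complex.exp (-(Complex.I * (s : ℂ) * (x : ℂ))) with hE
  have hEn : ∀ x, ‖E x‖ = 1 := by
    intro x
    have : E x = Complex.exp (((-(s * x) : ℝ) : ℂ) * Complex.I) := by
      simp only [hE]; congr 1; push_cast; ring
    rw [this, Complex.norm_exp_ofReal_mul_I]
  have hd : ∀ x, HasDerivAt E (-(Complex.I * (s : ℂ)) * E x) x := by
    intro x
    have h1 : HasDerivAt (fun y : ℝ => -(Complex.I * (s : ℂ) * (y : ℂ)))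
        (-(Complex.I * (s : ℂ) * 1)) x :=
      ((Complex.ofRealCLM.hasDerivAt (x := x)).const_mul (Complex.I * (s : ℂ))).neg
    have h2 := h1.cexp
    rw [mul_one] at h2
    rw [mul_comm]
    exact h2
  have hEc : Continuous E := continuous_iff_continuousAt.2 fun x => (hd x).continuousAt
  have hz : ∀ l : Filter ℝ, Tendsto f l (nhds 0) → Tendsto (fun x => E x * f x) l (nhds 0) := by
    intro l h
    rw [tendsto_zero_iff_norm_tendsto_zero] at h ⊢
    simpa [hEn] using h
  set B : ℝ × ℝ → ℂ := fun T => E T.2 * f T.2 - E (-T.1) * f (-T.1) with hB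
  have hBt : Tendsto B (atTop ×ˢ atTop) (nhds 0) := by
    have h1 := (hz _ hlim₁).comp (tendsto_snd (f := (atTop : Filter ℝ)) (g := (atTop : Filter ℝ)))
    have h2 := ((hz _ hlim₂).comp tendsto_neg_atTop_atBot).comp
      (tendsto_fst (f := (atTop : Filter ℝ)) (g := (atTop : Filter ℝ)))
    simpa using h1.sub h2
  have hev : ∀ᶠ T : ℝ × ℝ in atTop ×ˢ atTop,
      ∫ x in (-T.1)..T.2, E x * f' x
        = B T + Complex.I * (s : ℂ) * ∫ x in (-T.1)..T.2, E x * f x := by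
    filter_upwards [(eventually_ge_atTop (0:ℝ)).prod_mk (eventually_ge_atTop (0:ℝ))] with T hT
    rw [aux_parts f f' hloc hftc E _ hd (continuous_const.mul hEc) _ _ (by linarith [hT.1, hT.2])]
    simp_rw [mul_assoc (-(Complex.I * (s : ℂ)))]
    rw [intervalIntegral.integral_const_mul]
    simp only [hB]; ring
  have fwd : ∀ M, HasFourierHK f s M → HasFourierHK f' s (Complex.I * (s : ℂ) * M) := by
    intro M hM
    have := hBt.add (Tendsto.const_mul (Complex.I * (s : ℂ)) hM)
    rw [zero_add] at this
    exact this.congr' (hev.mono fun T h => h.symm)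
  have bwd : ∀ L, HasFourierHK f' s L → HasFourierHK f s ((Complex.I * (s : ℂ))⁻¹ * L) := by
    intro L hL
    have := Tendsto.const_mul (Complex.I * (s : ℂ))⁻¹ (Tendsto.sub hL hBt)
    rw [sub_zero] at this
    refine this.congr' (hev.mono fun T h => ?_)
    change (Complex.I * (s : ℂ))⁻¹ * ((∫ x in (-T.1)..T.2, E x * f' x) - B T) = _
    rw [h, add_sub_cancel_left, inv_mul_cancel_left₀ hc]
  exact ⟨⟨fun ⟨L, h⟩ => ⟨_, bwd L h⟩, fun ⟨M, h⟩ => ⟨_, fwd M h⟩⟩,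
    fun L M hL hM => tendsto_nhds_unique hL (fwd M hM)⟩
end

section
/- Let f : ℝ → ℂ be locally integrable such that F(x) = ∫_0^x f has finite limits as x → ∞ and as x → −∞, and let g : ℝ → ℝ have bounded variation on ℝ. Then for every x ∈ ℝ the improper convolution f∗g(x) = lim_{T₁,T₂→∞} ∫_{-T₁}^{T₂} f(x−t) g(t) dt exists, and |f∗g(x)| ≤ |lim_{T₁,T₂→∞} ∫_{-T₁}^{T₂} f| · inf_{t∈ℝ} |g(t)| + ‖f‖_A · V_ℝ g, where ‖f‖_A = sup_{a ≤ b} |∫_a^b f| (which is finite under the stated hypothesis). -/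
open MeasureTheory Filter

lemma ord_int (h : ℝ → ℂ) (a b : ℝ) (hab : a ≤ b) (S : Set ℝ) (hS : S.OrdConnected)
    (hSab : S ⊆ Set.Ioc a b) :
    ∃ c d, a ≤ c ∧ c ≤ d ∧ d ≤ b ∧ ∫ t in S, h t = ∫ t in c..d, h t := by
  rcases S.eq_empty_or_nonempty with rfl | hne
  · exact ⟨a, a, le_rfl, le_rfl, hab, by simp⟩
  have hb : BddBelow S := ⟨a, fun x hx => (hSab hx).1.le⟩
  have hB : BddAbove S := ⟨b, fun x hx => (hSab hx).2⟩
  have hcd : sInf S ≤ sSup S := csInf_le_csSup hne hb hB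
  refine ⟨sInf S, sSup S, le_csInf hne fun x hx => (hSab hx).1.le, hcd,
    csSup_le hne fun x hx => (hSab hx).2, ?_⟩
  rw [intervalIntegral.integral_of_le hcd]
  apply setIntegral_congr_set
  have h1 : S ⊆ Set.Icc (sInf S) (sSup S) := fun x hx => ⟨csInf_le hb hx, le_csSup hB hx⟩
  have h2 : Set.Ioo (sInf S) (sSup S) ⊆ S := by
    rintro x ⟨hx1, hx2⟩
    obtain ⟨y, hy, hyx⟩ := exists_lt_of_csInf_lt hne hx1
    obtain ⟨z, hz, hxz⟩ := exists_lt_of_lt_csSup hne hx2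
    exact hS.out hy hz ⟨hyx.le, hxz.le⟩
  refine Filter.EventuallyLE.antisymm ?_ ?_
  · exact (LE.le.eventuallyLE h1).trans Ioc_ae_eq_Icc.symm.le
  · exact Ioo_ae_eq_Ioc.symm.le.trans (LE.le.eventuallyLE h2)

lemma layer (h : ℝ → ℂ) (a b : ℝ) (hab : a ≤ b) (hh : IntegrableOn h (Set.Ioc a b))
    (p : ℝ → ℝ) (hp : Measurable p) (ho : ∀ u, {t | u < p t}.OrdConnected) (P A : ℝ)
    (h0 : ∀ t ∈ Set.Ioc a b, 0 ≤ p t) (hP : ∀ t ∈ Set.Ioc a b, p t ≤ P) (hP0 : 0 ≤ P)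
    (hA : ∀ c d, a ≤ c → c ≤ d → d ≤ b → ‖∫ t in c..d, h t‖ ≤ A) :
    ‖∫ t in a..b, h t * (p t : ℂ)‖ ≤ A * P := by
  rw [intervalIntegral.integral_of_le hab]
  have hm : MeasurableSet {z : ℝ × ℝ | z.2 < p z.1} :=
    measurableSet_lt measurable_snd (hp.comp measurable_fst)
  have e1 : ∫ t in Set.Ioc a b, h t * (p t : ℂ) = ∫ t in Set.Ioc a b, ∫ u in Set.Ioc 0 P,
      {z : ℝ × ℝ | z.2 < p z.1}.indicator (fun z => h z.1) (t, u) := by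
    apply setIntegral_congr_fun measurableSet_Ioc
    intro t ht
    have : ∀ u, {z : ℝ × ℝ | z.2 < p z.1}.indicator (fun z => h z.1) (t, u)
      = (Set.Iio (p t)).indicator (fun _ => h t) u := by
      intro u; simp [Set.indicator]
    simp only [this]
    rw [setIntegral_indicator measurableSet_Iio, setIntegral_const]
    have hs : Set.Ioc 0 P ∩ Set.Iio (p t) = Set.Ioo 0 (p t) := by
      ext u; simp only [Set.mem_inter_iff, Set.mem_Ioc, Set.mem_Iio, Set.mem_Ioo]
      have := hP t ht
      constructor
      · rintro ⟨⟨_, _⟩, _⟩; constructor <;> assumption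
      · rintro ⟨_, _⟩; exact ⟨⟨by assumption, by linarith⟩, by assumption⟩
    rw [hs]
    simp [Measure.real, h0 t ht, mul_comm]
  rw [e1, integral_integral_swap]
  · have := norm_setIntegral_le_of_norm_le_const (μ := volume) (s := Set.Ioc 0 P) (C := A)
      (f := fun u => ∫ t in Set.Ioc a b, {z : ℝ × ℝ | z.2 < p z.1}.indicator (fun z => h z.1) (t, u))
      (by simp) ?_
    · simpa [Measure.real, hP0] using this
    intro u hu
    have : ∀ t, {z : ℝ × ℝ | z.2 < p z.1}.indicator (fun z => h z.1) (t, u)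
      = {t | u < p t}.indicator h t := by
      intro t; simp [Set.indicator]
    simp only [this]
    rw [setIntegral_indicator (measurableSet_lt measurable_const hp)]
    obtain ⟨c, d, h1, h2, h3, h4⟩ := ord_int h a b hab (Set.Ioc a b ∩ {t | u < p t})
      (Set.ordConnected_Ioc.inter (ho u)) Set.inter_subset_left
    rw [h4]; exact hA c d h1 h2 h3
  · exact (Integrable.comp_fst hh _).indicator hm

lemma mono_bd (h : ℝ → ℂ) (hh : ∀ a b, IntegrableOn h (Set.Icc a b)) (p : ℝ → ℝ) (hp : Monotone p)
    (a b : ℝ) : IntervalIntegrable (fun t => h t * (p t : ℂ)) volume a b := by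
  rw [intervalIntegrable_iff]
  have h1 : IntegrableOn h (Set.uIoc a b) := (hh _ _).mono_set Set.uIoc_subset_uIcc
  refine Integrable.mul_bdd (c := max |p (min a b)| |p (max a b)|) h1
    (Complex.measurable_ofReal.comp hp.measurable).aestronglyMeasurable ?_
  filter_upwards [ae_restrict_mem measurableSet_uIoc] with t ht
  rw [Complex.norm_real]
  exact abs_le_max_abs_abs (hp ht.1.le) (hp ht.2)

lemma mono_bd2 (h : ℝ → ℂ) (hh : ∀ a b, IntegrableOn h (Set.Icc a b)) (p : ℝ → ℝ) (hp : Monotone p)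
    (a s b A : ℝ) (has : a ≤ s) (hsb : s ≤ b) (hs : p s = 0)
    (hA : ∀ c d, a ≤ c → c ≤ d → d ≤ b → ‖∫ t in c..d, h t‖ ≤ A) :
    ‖∫ t in a..b, h t * (p t : ℂ)‖ ≤ A * (p b - p a) := by
  rw [← intervalIntegral.integral_add_adjacent_intervals (mono_bd h hh p hp a s) (mono_bd h hh p hp s b)]
  have h1 := layer h s b hsb ((hh s b).mono_set Set.Ioc_subset_Icc_self) p hp.measurable
    (fun u => ⟨fun x hx y hy z hz => lt_of_lt_of_le hx (hp hz.1)⟩) (p b) A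
    (fun t ht => hs ▸ hp ht.1.le) (fun t ht => hp ht.2) (hs ▸ hp hsb)
    (fun c d h1 h2 h3 => hA c d (by linarith) h2 h3)
  have h2 := layer h a s has ((hh a s).mono_set Set.Ioc_subset_Icc_self) (fun t => - p t)
    hp.measurable.neg
    (fun u => ⟨fun x hx y hy z hz => lt_of_lt_of_le hy (neg_le_neg (hp hz.2))⟩) (-p a) A
    (fun t ht => by have := hp ht.2; linarith) (fun t ht => neg_le_neg (hp ht.1.le))
    (by have := hp has; linarith)
    (fun c d h1 h2 h3 => hA c d h1 h2 (by linarith))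
  have h3 : ∫ t in a..s, h t * ((-p t : ℝ) : ℂ) = - ∫ t in a..s, h t * (p t : ℂ) := by
    rw [← intervalIntegral.integral_neg]; congr 1; ext t; push_cast; ring
  rw [h3, norm_neg] at h2
  refine (norm_add_le _ _).trans ?_
  linarith

lemma bv_int (h : ℝ → ℂ) (hh : ∀ a b, IntegrableOn h (Set.Icc a b)) (g : ℝ → ℝ)
    (hg : BoundedVariationOn g Set.univ) (a b : ℝ) :
    IntervalIntegrable (fun t => h t * (g t : ℂ)) volume a b := by
  obtain ⟨p, q, hp, hq, hpq⟩ := hg.locallyBoundedVariationOn.exists_monotoneOn_sub_monotoneOn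
  rw [monotoneOn_univ] at hp hq
  refine ((mono_bd h hh p hp a b).sub (mono_bd h hh q hq a b)).congr ?_
  intro t _
  simp [hpq, mul_sub]

lemma key (h : ℝ → ℂ) (hh : ∀ a b, IntegrableOn h (Set.Icc a b)) (g : ℝ → ℝ)
    (hg : BoundedVariationOn g Set.univ)
    (a s b A : ℝ) (has : a ≤ s) (hsb : s ≤ b)
    (hA : ∀ c d, a ≤ c → c ≤ d → d ≤ b → ‖∫ t in c..d, h t‖ ≤ A) :
    ‖(∫ t in a..b, h t * (g t : ℂ)) - (∫ t in a..b, h t) * (g s : ℂ)‖ ≤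
      A * (eVariationOn g Set.univ).toReal := by
  have hA0 : 0 ≤ A := (norm_nonneg _).trans (hA a a le_rfl le_rfl (has.trans hsb))
  obtain ⟨p, q, hp, hq, hpq, hv⟩ :=
    hg.locallyBoundedVariationOn.exists_monotoneOn_sub_monotoneOn'
  rw [monotoneOn_univ] at hp hq
  have hp' : Monotone (fun t => p t - p s) := fun x y hxy => sub_le_sub_right (hp hxy) _
  have hq' : Monotone (fun t => q t - q s) := fun x y hxy => sub_le_sub_right (hq hxy) _
  have b1 := mono_bd2 h hh _ hp' a s b A has hsb (by simp) hA
  have b2 := mono_bd2 h hh _ hq' a s b A has hsb (by simp) hA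
  have hi : IntervalIntegrable h volume a b := by
    rw [intervalIntegrable_iff]
    exact (hh _ _).mono_set Set.uIoc_subset_uIcc
  have e : (∫ t in a..b, h t * (g t : ℂ)) - (∫ t in a..b, h t) * (g s : ℂ) =
      (∫ t in a..b, h t * ((p t - p s : ℝ) : ℂ)) - ∫ t in a..b, h t * ((q t - q s : ℝ) : ℂ) := by
    rw [← intervalIntegral.integral_mul_const, ← intervalIntegral.integral_sub
      (bv_int h hh g hg a b) (hi.mul_const _), ← intervalIntegral.integral_sub
      (mono_bd h hh _ hp' a b) (mono_bd h hh _ hq' a b)]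
    congr 1
    ext t
    simp only [hpq, Pi.sub_apply]
    push_cast
    ring
  rw [e]
  refine (norm_sub_le _ _).trans ((add_le_add b1 b2).trans ?_)
  rw [← mul_add]
  refine mul_le_mul_of_nonneg_left ?_ hA0
  have h1 := hv a trivial b trivial
  have h2 := variationOnFromTo.abs_le_eVariationOn hg (a := a) (b := b)
  have h3 := le_abs_self (variationOnFromTo g Set.univ a b)
  linarith

lemma conv (h : ℝ → ℂ) (hh : ∀ a b, IntegrableOn h (Set.Icc a b)) (g : ℝ → ℝ)
    (hg : BoundedVariationOn g Set.univ) (l : Filter ℝ) [l.NeBot]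
    (hl : ∀ s ∈ l, ∃ t ∈ l, t ⊆ s ∧ t.OrdConnected)
    (hF : ∃ c : ℂ, Tendsto (fun x : ℝ => ∫ t in (0:ℝ)..x, h t) l (nhds c)) :
    ∃ c : ℂ, Tendsto (fun x : ℝ => ∫ t in (0:ℝ)..x, h t * (g t : ℂ)) l (nhds c) := by
  have hi : ∀ a b, IntervalIntegrable h volume a b := fun a b => by
    rw [intervalIntegrable_iff]
    exact (hh _ _).mono_set Set.uIoc_subset_uIcc
  have hig := bv_int h hh g hg
  rw [← cauchy_map_iff_exists_tendsto, Metric.cauchy_iff] at hF ⊢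
  refine ⟨inferInstance, fun ε hε => ?_⟩
  set V := (eVariationOn g Set.univ).toReal with hV
  have hV0 : 0 ≤ V := ENNReal.toReal_nonneg
  set M := |g 0| + V with hM
  have hM0 : 0 ≤ M := by positivity
  have hgM : ∀ t, |g t| ≤ M := fun t => by
    have := hg.dist_le (Set.mem_univ t) (Set.mem_univ 0)
    rw [Real.dist_eq] at this
    have h2 := abs_sub_abs_le_abs_sub (g t) (g 0)
    linarith
  obtain ⟨S, hS, hS2⟩ := hF.2 (ε / (M + V + 1)) (by positivity)
  obtain ⟨T, hT, hTS, hTo⟩ := hl _ hS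
  refine ⟨_, image_mem_map hT, ?_⟩
  have main : ∀ c ∈ T, ∀ d ∈ T, c ≤ d → dist (∫ t in (0:ℝ)..d, h t * (g t : ℂ))
      (∫ t in (0:ℝ)..c, h t * (g t : ℂ)) < ε := by
    intro c hc d hd hcd
    have hA : ∀ c' d', c ≤ c' → c' ≤ d' → d' ≤ d → ‖∫ t in c'..d', h t‖ ≤ ε / (M + V + 1) := by
      intro c' d' h1 h2 h3
      have := hS2 _ (hTS (hTo.out hc hd ⟨h1.trans h2, h3⟩)) _ (hTS (hTo.out hc hd ⟨h1, h2.trans h3⟩))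
      rw [dist_eq_norm, intervalIntegral.integral_interval_sub_left (hi _ _) (hi _ _)] at this
      exact this.le
    have k := key h hh g hg c c d _ le_rfl hcd hA
    rw [dist_eq_norm, intervalIntegral.integral_interval_sub_left (hig _ _) (hig _ _)]
    have k2 := norm_le_norm_sub_add (∫ t in c..d, h t * (g t : ℂ)) ((∫ t in c..d, h t) * (g c : ℂ))
    rw [norm_mul, Complex.norm_real, Real.norm_eq_abs] at k2
    have k3 : ‖∫ t in c..d, h t‖ * |g c| ≤ ε / (M + V + 1) * M :=
      mul_le_mul (hA c d le_rfl hcd le_rfl) (hgM c) (abs_nonneg _) (by positivity)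
    have k4 : ε / (M + V + 1) * V + ε / (M + V + 1) * M < ε := by
      rw [← mul_add, div_mul_eq_mul_div, div_lt_iff₀ (by positivity)]
      nlinarith
    linarith
  rintro _ ⟨c, hc, rfl⟩ _ ⟨d, hd, rfl⟩
  rcases le_total c d with hcd | hcd
  · rw [dist_comm]; exact main c hc d hd hcd
  · exact main d hd c hc hcd

lemma comb (k : ℝ → ℂ) (hk : ∀ a b, IntervalIntegrable k volume a b) (c₁ c₂ : ℂ)
    (h1 : Tendsto (fun x : ℝ => ∫ t in (0:ℝ)..x, k t) atTop (nhds c₁))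
    (h2 : Tendsto (fun x : ℝ => ∫ t in (0:ℝ)..x, k t) atBot (nhds c₂)) :
    Tendsto (fun T : ℝ × ℝ => ∫ t in (-T.1)..T.2, k t) (atTop ×ˢ atTop) (nhds (c₁ - c₂)) := by
  have ha : Tendsto (fun T : ℝ × ℝ => T.2) (atTop ×ˢ atTop) atTop := tendsto_snd
  have hb : Tendsto (fun T : ℝ × ℝ => -T.1) (atTop ×ˢ atTop) atBot :=
    tendsto_neg_atTop_atBot.comp tendsto_fst
  have h3 := (h1.comp ha).sub (h2.comp hb)
  refine h3.congr fun T => ?_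
  exact intervalIntegral.integral_interval_sub_left (hk _ _) (hk _ _)

lemma bdd (f : ℝ → ℂ) (hf : ∀ a b, IntervalIntegrable f volume a b)
    (hF₁ : ∃ c : ℂ, Tendsto (fun x : ℝ => ∫ t in (0:ℝ)..x, f t) atTop (nhds c))
    (hF₂ : ∃ c : ℂ, Tendsto (fun x : ℝ => ∫ t in (0:ℝ)..x, f t) atBot (nhds c)) :
    BddAbove {r : ℝ | ∃ c d : ℝ, c ≤ d ∧ r = ‖∫ t in c..d, f t‖} := by
  obtain ⟨c₁, h1⟩ := hF₁
  obtain ⟨c₂, h2⟩ := hF₂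
  have hc := intervalIntegral.continuous_primitive hf 0
  obtain ⟨X, hX⟩ := eventually_atTop.1 (h1.norm.eventually (gt_mem_nhds (lt_add_one ‖c₁‖)))
  obtain ⟨Y, hY⟩ := eventually_atBot.1 (h2.norm.eventually (gt_mem_nhds (lt_add_one ‖c₂‖)))
  obtain ⟨C, hC⟩ := (isCompact_Icc (a := Y) (b := X)).exists_bound_of_continuousOn hc.continuousOn
  have hb : ∀ x, ‖∫ t in (0:ℝ)..x, f t‖ ≤ max (max (‖c₁‖ + 1) (‖c₂‖ + 1)) C := by
    intro x
    rcases le_total X x with hx | hx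
    · exact (hX x hx).le.trans ((le_max_left _ _).trans (le_max_left _ _))
    rcases le_total x Y with hy | hy
    · exact (hY x hy).le.trans ((le_max_right _ _).trans (le_max_left _ _))
    · exact (hC x ⟨hy, hx⟩).trans (le_max_right _ _)
  refine ⟨2 * max (max (‖c₁‖ + 1) (‖c₂‖ + 1)) C, ?_⟩
  rintro _ ⟨c, d, _, rfl⟩
  rw [← intervalIntegral.integral_interval_sub_left (hf 0 d) (hf 0 c)]
  have := norm_sub_le (∫ t in (0:ℝ)..d, f t) (∫ t in (0:ℝ)..c, f t)
  linarith [hb c, hb d]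

/-- Proposition 8(a): for `f` with convergent indefinite integral at `±∞` and `g` of
bounded variation on `ℝ`, the improper convolution `f∗g(x)` exists for every `x` and
`|f∗g(x)| ≤ |∫_{-∞}^∞ f| · inf |g| + ‖f‖_A · V g`. -/
theorem stmt12 (f : ℝ → ℂ) (g : ℝ → ℝ)
    (hf : ∀ a b : ℝ, IntegrableOn f (Set.Icc a b))
    (hF₁ : ∃ c : ℂ, Tendsto (fun x : ℝ => ∫ t in (0:ℝ)..x, f t) atTop (nhds c))
    (hF₂ : ∃ c : ℂ, Tendsto (fun x : ℝ => ∫ t in (0:ℝ)..x, f t) atBot (nhds c))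
    (hg : BoundedVariationOn g Set.univ) :
    ∃ If : ℂ, ∃ fg : ℝ → ℂ,
      Tendsto (fun T : ℝ × ℝ => ∫ t in (-T.1)..T.2, f t) (atTop ×ˢ atTop) (nhds If) ∧
      ∀ x : ℝ,
        Tendsto (fun T : ℝ × ℝ => ∫ t in (-T.1)..T.2, f (x - t) * ((g t : ℝ) : ℂ))
          (atTop ×ˢ atTop) (nhds (fg x)) ∧
        ‖fg x‖ ≤ ‖If‖ * (⨅ t : ℝ, |g t|) +
          sSup {r : ℝ | ∃ c d : ℝ, c ≤ d ∧ r = ‖∫ t in c..d, f t‖} *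
            (eVariationOn g Set.univ).toReal := by
  have hi : ∀ a b, IntervalIntegrable f volume a b := fun a b => by
    rw [intervalIntegrable_iff]
    exact (hf _ _).mono_set Set.uIoc_subset_uIcc
  have hbdd := bdd f hi hF₁ hF₂
  obtain ⟨c₁, h1⟩ := hF₁
  obtain ⟨c₂, h2⟩ := hF₂
  set A := sSup {r : ℝ | ∃ c d : ℝ, c ≤ d ∧ r = ‖∫ t in c..d, f t‖} with hAdef
  have hA : ∀ c d, c ≤ d → ‖∫ t in c..d, f t‖ ≤ A := fun c d hcd =>
    le_csSup hbdd ⟨c, d, hcd, rfl⟩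
  have main : ∀ x : ℝ, ∃ z : ℂ,
        Tendsto (fun T : ℝ × ℝ => ∫ t in (-T.1)..T.2, f (x - t) * ((g t : ℝ) : ℂ))
          (atTop ×ˢ atTop) (nhds z) ∧
        ‖z‖ ≤ ‖c₁ - c₂‖ * (⨅ t : ℝ, |g t|) + A * (eVariationOn g Set.univ).toReal := by
    intro x
    have hhi : ∀ a b, IntervalIntegrable (fun t => f (x - t)) volume a b := fun a b => by
      have := (hi (x - a) (x - b)).comp_sub_left x
      simpa using this
    have hh : ∀ a b, IntegrableOn (fun t => f (x - t)) (Set.Icc a b) := fun a b => by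
      rcases le_total a b with hab | hab
      · exact (intervalIntegrable_iff_integrableOn_Icc_of_le hab).1 (hhi a b)
      · exact ((intervalIntegrable_iff_integrableOn_Icc_of_le hab).1 (hhi b a)).mono_set
          (fun y hy => ⟨hab.trans hy.1, hy.2.trans hab⟩)
    have e : ∀ y, (∫ t in (0:ℝ)..x, f t) - (∫ t in (0:ℝ)..(x - y), f t) =
        ∫ t in (0:ℝ)..y, f (x - t) := fun y => by
      rw [intervalIntegral.integral_comp_sub_left, sub_zero,
        intervalIntegral.integral_interval_sub_left (hi _ _) (hi _ _)]
    have t1 : Tendsto (fun y : ℝ => ∫ t in (0:ℝ)..y, f (x - t)) atTop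
        (nhds ((∫ t in (0:ℝ)..x, f t) - c₂)) := by
      refine Tendsto.congr e (tendsto_const_nhds.sub (h2.comp ?_))
      exact (tendsto_atBot_add_const_left atTop x tendsto_neg_atTop_atBot).congr fun y => (sub_eq_add_neg x y).symm
    have t2 : Tendsto (fun y : ℝ => ∫ t in (0:ℝ)..y, f (x - t)) atBot
        (nhds ((∫ t in (0:ℝ)..x, f t) - c₁)) := by
      refine Tendsto.congr e (tendsto_const_nhds.sub (h1.comp ?_))
      exact (tendsto_atTop_add_const_left atBot x tendsto_neg_atBot_atTop).congr fun y => (sub_eq_add_neg x y).symm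
    have tI := comb _ hhi _ _ t1 t2
    rw [sub_sub_sub_cancel_left] at tI
    obtain ⟨d₁, k1⟩ := conv _ hh g hg atTop (fun s hs => by
      obtain ⟨X, hX⟩ := mem_atTop_sets.1 hs
      exact ⟨Set.Ici X, Ici_mem_atTop X, hX, Set.ordConnected_Ici⟩) ⟨_, t1⟩
    obtain ⟨d₂, k2⟩ := conv _ hh g hg atBot (fun s hs => by
      obtain ⟨X, hX⟩ := mem_atBot_sets.1 hs
      exact ⟨Set.Iic X, Iic_mem_atBot X, hX, Set.ordConnected_Iic⟩) ⟨_, t2⟩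
    have tg := comb _ (bv_int _ hh g hg) _ _ k1 k2
    refine ⟨_, tg, ?_⟩
    rw [Real.mul_iInf_of_nonneg (norm_nonneg _), ← sub_le_iff_le_add]
    refine le_ciInf fun s => ?_
    have hle : ‖(d₁ - d₂) - (c₁ - c₂) * (g s : ℂ)‖ ≤ A * (eVariationOn g Set.univ).toReal := by
      refine le_of_tendsto (tg.sub (tI.mul_const _)).norm ?_
      have ev1 : ∀ᶠ T : ℝ × ℝ in atTop ×ˢ atTop, -s ≤ T.1 := tendsto_fst.eventually (eventually_ge_atTop (-s))
      have ev2 : ∀ᶠ T : ℝ × ℝ in atTop ×ˢ atTop, s ≤ T.2 := tendsto_snd.eventually (eventually_ge_atTop s)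
      filter_upwards [ev1, ev2] with T hT1 hT2
      refine key _ hh g hg (-T.1) s T.2 A (by linarith) hT2 fun c d _ hcd _ => ?_
      rw [intervalIntegral.integral_comp_sub_left]
      exact hA _ _ (by linarith)
    have k3 := norm_le_norm_sub_add (d₁ - d₂) ((c₁ - c₂) * (g s : ℂ))
    rw [norm_mul, Complex.norm_real, Real.norm_eq_abs] at k3
    linarith
  choose fg hfg using main
  exact ⟨c₁ - c₂, fg, comb f hi c₁ c₂ h1 h2, hfg⟩
end

section
/- Let f : ℝ → ℂ be locally integrable and let g : ℝ → ℝ have bounded variation on ℝ with support contained in a compact interval [a,b]. Then for every x ∈ ℝ the convolution f∗g(x) = ∫_a^b f(x−t) g(t) dt exists as a Lebesgue integral, and |f∗g(x)| ≤ |∫_{x−b}^{x−a} f| · inf_{t∈[a,b]} |g(t)| + (sup_{x−b ≤ c ≤ d ≤ x−a} |∫_c^d f|) · V_{[a,b]} g. -/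
open MeasureTheory Filter

lemma key_aux (h : ℝ → ℂ) (g v : ℝ → ℝ) (M s₀ b : ℝ) (hsb : s₀ ≤ b)
    (hh : ∀ s t, IntervalIntegrable h volume s t)
    (hhg : ∀ s t, IntervalIntegrable (fun t => h t * (g t : ℂ)) volume s t)
    (hM : ∀ s, s₀ ≤ s → s ≤ b → ‖∫ t in s..b, h t‖ ≤ M)
    (hv : ∀ s t, s₀ ≤ s → s ≤ t → t ≤ b → |g t - g s| ≤ v t - v s) :
    ‖∫ t in s₀..b, h t * ((g t : ℂ) - (g s₀ : ℂ))‖ ≤ M * (v b - v s₀) := by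
  have hi : ∀ c : ℂ, ∀ s t, IntervalIntegrable (fun t => h t * ((g t : ℂ) - c)) volume s t := by
    intro c s t
    have := (hhg s t).sub ((hh s t).mul_const c)
    refine this.congr ?_
    exact fun y _ => (mul_sub _ _ _).symm
  have hvb : 0 ≤ v b - v s₀ := (abs_nonneg _).trans (hv s₀ b le_rfl hsb le_rfl)
  have main : ∀ ε : ℝ, 0 < ε →
      ‖∫ t in s₀..b, h t * ((g t : ℂ) - (g s₀ : ℂ))‖ ≤ (M + ε) * (v b - v s₀) := by
    intro ε hε
    have hc : Continuous (fun t => ∫ u in s₀..t, ‖h u‖) :=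
      intervalIntegral.continuous_primitive (fun s t => (hh s t).norm) s₀
    have huc := isCompact_Icc.uniformContinuousOn_of_continuous (s := Set.Icc s₀ b) hc.continuousOn
    rw [Metric.uniformContinuousOn_iff] at huc
    obtain ⟨δ, hδ, hd⟩ := huc ε hε
    have ind : ∀ n : ℕ, ∀ s, s₀ ≤ s → s ≤ b → b - s ≤ n * (δ / 2) →
        ‖∫ t in s..b, h t * ((g t : ℂ) - (g s : ℂ))‖ ≤ (M + ε) * (v b - v s) := by
      intro n
      induction n with
      | zero =>
        intro s h1 h2 h3
        have : s = b := by
          simp at h3; linarith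
        subst this
        simp
      | succ n ih =>
        intro s h1 h2 h3
        set s' := min b (s + δ / 2) with hs'
        have hss' : s ≤ s' := le_min h2 (by linarith)
        have hs'b : s' ≤ b := min_le_left _ _
        have hs'd : s' ≤ s + δ / 2 := min_le_right _ _
        have h4 : b - s' ≤ n * (δ / 2) := by
          rcases min_choice b (s + δ / 2) with h | h
          · rw [hs', h]; simp; positivity
          · rw [hs', h]; push_cast at h3; linarith
        have ih' := ih s' (h1.trans hss') hs'b h4
        have hsm : ∫ u in s..s', ‖h u‖ ≤ ε := by
          have := hd s' ⟨h1.trans hss', hs'b⟩ s ⟨h1, h2⟩ (by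
            rw [Real.dist_eq, abs_of_nonneg (by linarith)]; linarith)
          rw [Real.dist_eq, intervalIntegral.integral_interval_sub_left
            ((hh _ _).norm) ((hh _ _).norm)] at this
          exact (le_abs_self _).trans this.le
        have hA : ‖∫ t in s..s', h t * ((g t : ℂ) - (g s : ℂ))‖ ≤ ε * (v s' - v s) := by
          have h0 : 0 ≤ v s' - v s := (abs_nonneg _).trans (hv s s' h1 hss' hs'b)
          calc _ ≤ ∫ t in s..s', ‖h t‖ * (v s' - v s) := by
                apply intervalIntegral.norm_integral_le_of_norm_le hss'
                · refine Eventually.of_forall fun t ht => ?_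
                  rw [norm_mul, ← Complex.ofReal_sub, Complex.norm_real, Real.norm_eq_abs]
                  have e1 := hv s t h1 ht.1.le (ht.2.trans hs'b)
                  have e2 := (abs_nonneg _).trans (hv t s' (h1.trans ht.1.le) ht.2 hs'b)
                  exact mul_le_mul_of_nonneg_left (by linarith) (norm_nonneg _)
                · exact (hh _ _).norm.mul_const _
            _ = (∫ t in s..s', ‖h t‖) * (v s' - v s) := by
                rw [intervalIntegral.integral_mul_const]
            _ ≤ _ := mul_le_mul_of_nonneg_right hsm h0
        have hB : ‖((g s' : ℂ) - g s) * ∫ t in s'..b, h t‖ ≤ M * (v s' - v s) := by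
          rw [norm_mul, ← Complex.ofReal_sub, Complex.norm_real, Real.norm_eq_abs, mul_comm]
          have e1 := hv s s' h1 hss' hs'b
          have e2 := hM s' (h1.trans hss') hs'b
          exact mul_le_mul e2 e1 (abs_nonneg _) ((norm_nonneg _).trans e2)
        have hsplit : ∫ t in s..b, h t * ((g t : ℂ) - (g s : ℂ)) =
            (∫ t in s..s', h t * ((g t : ℂ) - (g s : ℂ))) +
            ((∫ t in s'..b, h t * ((g t : ℂ) - (g s' : ℂ))) +
              ((g s' : ℂ) - g s) * ∫ t in s'..b, h t) := by
          rw [← intervalIntegral.integral_add_adjacent_intervals (hi _ s s') (hi _ s' b),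
            ← intervalIntegral.integral_const_mul,
            ← intervalIntegral.integral_add (hi _ _ _) ((hh _ _).const_mul _)]
          congr 2
          ext t
          ring
        rw [hsplit]
        refine (norm_add_le _ _).trans ?_
        have := norm_add_le (∫ t in s'..b, h t * ((g t : ℂ) - (g s' : ℂ)))
          (((g s' : ℂ) - g s) * ∫ t in s'..b, h t)
        linarith
    obtain ⟨n, hn⟩ := exists_nat_ge ((b - s₀) / (δ / 2))
    exact ind n s₀ le_rfl hsb (by rwa [div_le_iff₀ (by positivity)] at hn)
  by_contra! hcon
  have hpos : 0 < v b - v s₀ + 1 := by linarith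
  have := main ((‖∫ t in s₀..b, h t * ((g t : ℂ) - (g s₀ : ℂ))‖ - M * (v b - v s₀)) / (v b - v s₀ + 1))
    (div_pos (by linarith) hpos)
  set N := ‖∫ t in s₀..b, h t * ((g t : ℂ) - (g s₀ : ℂ))‖
  rw [add_mul, div_mul_eq_mul_div] at this
  have h2 : (N - M * (v b - v s₀)) * (v b - v s₀) / (v b - v s₀ + 1) < N - M * (v b - v s₀) := by
    rw [div_lt_iff₀ hpos]
    exact mul_lt_mul_of_pos_left (by linarith) (by linarith)
  linarith

/-- Proposition 8(b): for `f` locally integrable and `g` of bounded variation with support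
in a compact interval `[a,b]`, the convolution `f∗g(x) = ∫_a^b f(x−t) g(t) dt` exists as a
Lebesgue integral for every `x` and
`|f∗g(x)| ≤ |∫_{x−b}^{x−a} f| · inf_{[a,b]} |g| + ‖f‖_{[x−b,x−a]} · V_{[a,b]} g`. -/
theorem stmt13 (f : ℝ → ℂ) (g : ℝ → ℝ) (a b : ℝ) (hab : a ≤ b)
    (hf : ∀ c d : ℝ, IntegrableOn f (Set.Icc c d))
    (hg : BoundedVariationOn g (Set.Icc a b))
    (hsupp : ∀ t : ℝ, t ∉ Set.Icc a b → g t = 0) :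
    ∀ x : ℝ,
      IntegrableOn (fun t : ℝ => f (x - t) * ((g t : ℝ) : ℂ)) (Set.Icc a b) ∧
      ‖∫ t in a..b, f (x - t) * ((g t : ℝ) : ℂ)‖ ≤
        ‖∫ u in (x - b)..(x - a), f u‖ * sInf {r : ℝ | ∃ t ∈ Set.Icc a b, r = |g t|} +
        sSup {r : ℝ | ∃ c d : ℝ, x - b ≤ c ∧ c ≤ d ∧ d ≤ x - a ∧ r = ‖∫ u in c..d, f u‖} *
          (eVariationOn g (Set.Icc a b)).toReal := by
  intro x
  have hfi : ∀ c d, IntervalIntegrable f volume c d := fun c d =>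
    IntegrableOn.intervalIntegrable (hf (min c d) (max c d))
  have hh : ∀ s t, IntervalIntegrable (fun t => f (x - t)) volume s t := by
    intro s t
    have := (hfi (x - s) (x - t)).comp_sub_left x
    simpa using this
  have hgm : AEStronglyMeasurable (fun t => (g t : ℂ)) (volume.restrict (Set.Icc a b)) := by
    obtain ⟨p, q, hp, hq, hpq⟩ :=
      hg.locallyBoundedVariationOn.exists_monotoneOn_sub_monotoneOn
    have h1 := aemeasurable_restrict_of_monotoneOn (μ := volume) measurableSet_Icc hp
    have h2 := aemeasurable_restrict_of_monotoneOn (μ := volume) measurableSet_Icc hq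
    have h3 : AEMeasurable g (volume.restrict (Set.Icc a b)) := by
      rw [hpq]; exact h1.sub h2
    exact (Complex.measurable_ofReal.comp_aemeasurable h3).aestronglyMeasurable
  have hint : IntegrableOn (fun t : ℝ => f (x - t) * ((g t : ℝ) : ℂ)) (Set.Icc a b) := by
    have h1 : IntegrableOn (fun t => f (x - t)) (Set.Icc a b) :=
      (intervalIntegrable_iff_integrableOn_Icc_of_le hab).1 (hh a b)
    refine Integrable.mul_bdd (c := |g a| + (eVariationOn g (Set.Icc a b)).toReal) h1 hgm ?_
    refine (ae_restrict_iff' measurableSet_Icc).2 (Eventually.of_forall fun t ht => ?_)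
    rw [Complex.norm_real, Real.norm_eq_abs]
    have := hg.dist_le ht (Set.left_mem_Icc.2 hab)
    rw [Real.dist_eq] at this
    have h3 := abs_add_le (g a) (g t - g a)
    rw [add_sub_cancel] at h3
    linarith
  refine ⟨hint, ?_⟩
  have hint' : Integrable (fun t : ℝ => f (x - t) * ((g t : ℝ) : ℂ)) := by
    rw [← integrableOn_iff_integrable_of_support_subset (s := Set.Icc a b)]
    · exact hint
    · intro t ht
      by_contra hc
      simp [hsupp t hc] at ht
  have hhg : ∀ s t, IntervalIntegrable (fun t : ℝ => f (x - t) * ((g t : ℝ) : ℂ)) volume s t :=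
    fun s t => hint'.intervalIntegrable
  set S := {r : ℝ | ∃ c d : ℝ, x - b ≤ c ∧ c ≤ d ∧ d ≤ x - a ∧ r = ‖∫ u in c..d, f u‖} with hS
  have hbdd : BddAbove S := by
    refine ⟨∫ u in (x - b)..(x - a), ‖f u‖, ?_⟩
    rintro r ⟨c, d, h1, h2, h3, rfl⟩
    refine (intervalIntegral.norm_integral_le_integral_norm h2).trans ?_
    exact intervalIntegral.integral_mono_interval h1 h2 h3
      (Eventually.of_forall fun _ => norm_nonneg _) (hfi _ _).norm
  have hM : ∀ s t, a ≤ s → s ≤ t → t ≤ b → ‖∫ u in s..t, f (x - u)‖ ≤ sSup S := by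
    intro s t h1 h2 h3
    refine le_csSup hbdd ⟨x - t, x - s, by linarith, by linarith, by linarith, ?_⟩
    rw [intervalIntegral.integral_comp_sub_left]
  set V := (eVariationOn g (Set.Icc a b)).toReal with hV
  set v := variationOnFromTo g (Set.Icc a b) a with hvdef
  have ha : a ∈ Set.Icc a b := Set.left_mem_Icc.2 hab
  have hb : b ∈ Set.Icc a b := Set.right_mem_Icc.2 hab
  have hva : v a = 0 := variationOnFromTo.self _ _ _
  have hvb : v b = V := by
    rw [hvdef, variationOnFromTo.eq_of_le _ _ hab, Set.inter_self]
  have hv : ∀ s t, a ≤ s → s ≤ t → t ≤ b → |g t - g s| ≤ v t - v s := by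
    intro s t h1 h2 h3
    have hs : s ∈ Set.Icc a b := ⟨h1, h2.trans h3⟩
    have ht : t ∈ Set.Icc a b := ⟨h1.trans h2, h3⟩
    have e := variationOnFromTo.add hg.locallyBoundedVariationOn ha hs ht
    have e2 : |g t - g s| ≤ variationOnFromTo g (Set.Icc a b) s t := by
      rw [variationOnFromTo.eq_of_le _ _ h2, ← Real.dist_eq]
      have hb' : BoundedVariationOn g (Set.Icc a b ∩ Set.Icc s t) := hg.mono Set.inter_subset_left
      exact hb'.dist_le ⟨ht, h2, le_rfl⟩ ⟨hs, le_rfl, h2⟩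
    rw [hvdef]
    linarith
  have hpt : ∀ t₀ ∈ Set.Icc a b, ‖∫ t in a..b, f (x - t) * ((g t : ℝ) : ℂ)‖ ≤
      ‖∫ u in (x - b)..(x - a), f u‖ * |g t₀| + sSup S * V := by
    intro t₀ ht₀
    have R := key_aux (fun t => f (x - t)) g v (sSup S) t₀ b ht₀.2 hh hhg
      (fun s h1 h2 => hM s b (ht₀.1.trans h1) h2 le_rfl)
      (fun s t h1 h2 h3 => hv s t (ht₀.1.trans h1) h2 h3)
    have L := key_aux (fun t => f (x - -t)) (fun t => g (-t)) (fun t => - v (-t)) (sSup S)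
      (-t₀) (-a) (neg_le_neg ht₀.1)
      (fun s t => by simpa using (hh (-s) (-t)).comp_sub_left 0)
      (fun s t => by simpa using (hhg (-s) (-t)).comp_sub_left 0)
      (fun s h1 h2 => by
        rw [intervalIntegral.integral_comp_neg (fun t => f (x - t)), neg_neg]
        exact hM a (-s) le_rfl (by linarith) (by linarith [ht₀.2]))
      (fun s t h1 h2 h3 => by
        have := hv (-t) (-s) (by linarith) (by linarith) (by linarith [ht₀.2])
        rw [abs_sub_comm]
        linarith)
    have hrefl := intervalIntegral.integral_comp_neg (a := -t₀) (b := -a)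
      (fun t => f (x - t) * ((g t : ℂ) - (g t₀ : ℂ)))
    simp only [neg_neg] at L hrefl
    rw [hrefl] at L
    have hi : ∀ c : ℂ, ∀ s t,
        IntervalIntegrable (fun t => f (x - t) * ((g t : ℂ) - c)) volume s t := by
      intro c s t
      have := (hhg s t).sub ((hh s t).mul_const c)
      refine this.congr ?_
      exact fun y _ => (mul_sub _ _ _).symm
    have hsplit : ∫ t in a..b, f (x - t) * ((g t : ℝ) : ℂ) =
        (∫ u in (x - b)..(x - a), f u) * (g t₀ : ℂ) +
        ((∫ t in a..t₀, f (x - t) * ((g t : ℂ) - (g t₀ : ℂ))) +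
          ∫ t in t₀..b, f (x - t) * ((g t : ℂ) - (g t₀ : ℂ))) := by
      rw [intervalIntegral.integral_add_adjacent_intervals (hi _ a t₀) (hi _ t₀ b),
        ← intervalIntegral.integral_comp_sub_left (fun u => f u),
        ← intervalIntegral.integral_mul_const,
        ← intervalIntegral.integral_add ((hh _ _).mul_const _) (hi _ _ _)]
      congr 1
      ext t
      ring
    rw [hsplit]
    refine (norm_add_le _ _).trans (add_le_add ?_ ?_)
    · rw [norm_mul, Complex.norm_real, Real.norm_eq_abs]
    · refine (norm_add_le _ _).trans ((add_le_add L R).trans (le_of_eq ?_))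
      rw [hva, hvb]
      ring
  have hI0 : 0 ≤ ‖∫ u in (x - b)..(x - a), f u‖ := norm_nonneg _
  set I := ‖∫ u in (x - b)..(x - a), f u‖
  rcases hI0.eq_or_lt with h0 | h0
  · have := hpt a ha
    rw [← h0] at this ⊢
    simpa using this
  · rw [← sub_le_iff_le_add, ← div_le_iff₀' h0]
    refine le_csInf ⟨_, a, ha, rfl⟩ ?_
    rintro r ⟨t, ht, rfl⟩
    rw [div_le_iff₀ h0]
    linarith [hpt t ht]
end

section
/- Let f : ℝ → ℂ be locally integrable such that F(x) = ∫_0^x f has finite limits as x → ∞ and as x → −∞, and let g : ℝ → ℝ be Lebesgue integrable on ℝ and of bounded variation on ℝ. Then for every x ∈ ℝ the improper convolution f∗g(x) = lim_{T₁,T₂→∞} ∫_{-T₁}^{T₂} f(x−t) g(t) dt exists, and for all real numbers a ≤ b, |∫_a^b (f∗g)(x) dx| ≤ ‖f‖_A · ‖g‖₁, where ‖f‖_A = sup_{c ≤ d} |∫_c^d f| and ‖g‖₁ = ∫_{-∞}^{∞} |g|. -/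
open MeasureTheory Filter

lemma lemA (h : ℝ → ℂ) (p : ℝ → ℝ) (hp : Monotone p) (P M α β : ℝ) (hαβ : α ≤ β)
    (hP : ∀ t, |p t| ≤ P) (hh : IntegrableOn h (Set.Ioc α β))
    (hM : ∀ c, α ≤ c → c ≤ β → ‖∫ t in c..β, h t‖ ≤ M) :
    ‖∫ t in α..β, h t * (p t : ℂ)‖ ≤ 3 * P * M := by
  have hP0 : 0 ≤ P := (abs_nonneg _).trans (hP 0)
  have hM0 : 0 ≤ M := (norm_nonneg _).trans (hM α le_rfl hαβ)
  have hpm : Measurable p := hp.measurable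
  have hint : IntegrableOn (fun t => h t * (p t : ℂ)) (Set.Ioc α β) := by
    refine Integrable.mul_bdd (c := P) hh ?_ ?_
    · exact (Complex.measurable_ofReal.comp hpm).aestronglyMeasurable
    · refine Eventually.of_forall fun t => ?_
      simpa using hP t
  have hlayer : ∀ t, ∫ s in Set.Ico (-P) P,
      ({x : ℝ × ℝ | x.2 < p x.1}.indicator (fun x => h x.1)) (t, s) = h t * ((p t : ℂ) + P) := by
    intro t
    have h1 : (fun s => ({x : ℝ × ℝ | x.2 < p x.1}.indicator (fun x => h x.1)) (t, s))
      = (Set.Iio (p t)).indicator (fun _ => h t) := by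
      ext s; simp [Set.indicator]
    rw [h1, setIntegral_indicator measurableSet_Iio]
    have h2 : Set.Ico (-P) P ∩ Set.Iio (p t) = Set.Ico (-P) (p t) := by
      ext s; have := abs_le.1 (hP t); simp; intro _ h; linarith
    have h3 : 0 ≤ p t - -P := by have := abs_le.1 (hP t); linarith
    rw [h2, setIntegral_const, Measure.real, Real.volume_Ico, ENNReal.toReal_ofReal h3]
    simp [mul_comm]
  have hswap : ∫ t in Set.Ioc α β, h t * ((p t : ℂ) + P) = ∫ s in Set.Ico (-P) P, ∫ t in Set.Ioc α β,
      ({x : ℝ × ℝ | x.2 < p x.1}.indicator (fun x => h x.1)) (t, s) := by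
    simp_rw [← hlayer]
    apply integral_integral_swap
    refine Integrable.indicator ?_ (measurableSet_lt measurable_snd (hpm.comp measurable_fst))
    exact Integrable.comp_fst hh _
  have hinner : ∀ s, ‖∫ t in Set.Ioc α β,
      ({x : ℝ × ℝ | x.2 < p x.1}.indicator (fun x => h x.1)) (t, s)‖ ≤ M := by
    intro s
    have h1 : (fun t => ({x : ℝ × ℝ | x.2 < p x.1}.indicator (fun x => h x.1)) (t, s))
      = {t | s < p t}.indicator h := by
      ext t; simp [Set.indicator]
    rw [h1, setIntegral_indicator (measurableSet_lt measurable_const hpm)]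
    rcases Set.eq_empty_or_nonempty (Set.Ioc α β ∩ {t | s < p t}) with he | hne
    · rw [he]; simpa using hM0
    · set S := Set.Ioc α β ∩ {t | s < p t}
      have hbd : BddBelow S := ⟨α, fun t ht => ht.1.1.le⟩
      obtain ⟨t0, ht0⟩ := hne
      have hc1 : α ≤ sInf S := le_csInf ⟨t0, ht0⟩ fun t ht => ht.1.1.le
      have hc2 : sInf S ≤ β := (csInf_le hbd ht0).trans ht0.1.2
      have hae : S =ᵐ[volume] Set.Ioc (sInf S) β := by
        have hsub1 : Set.Ioc (sInf S) β ⊆ S := by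
          intro t ht
          obtain ⟨u, hu, hut⟩ := exists_lt_of_csInf_lt ⟨t0, ht0⟩ ht.1
          exact ⟨⟨hc1.trans_lt ht.1, ht.2⟩, lt_of_lt_of_le hu.2 (hp hut.le)⟩
        have hsub2 : S ⊆ Set.Icc (sInf S) β := fun t ht => ⟨csInf_le hbd ht, ht.1.2⟩
        exact ((hsub2.eventuallyLE).trans (Ioc_ae_eq_Icc (μ := volume)).symm.le).antisymm
          hsub1.eventuallyLE
      rw [setIntegral_congr_set hae, ← intervalIntegral.integral_of_le hc2]
      exact hM _ hc1 hc2
  have hbound : ‖∫ t in Set.Ioc α β, h t * ((p t : ℂ) + P)‖ ≤ M * (2 * P) := by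
    rw [hswap]
    refine (norm_setIntegral_le_of_norm_le_const (C := M) (by simp) fun s _ => hinner s).trans ?_
    rw [Measure.real, Real.volume_Ico, ENNReal.toReal_ofReal (by linarith)]
    apply le_of_eq; ring
  have hsplit : ∫ t in Set.Ioc α β, h t * ((p t : ℂ) + P) =
      (∫ t in Set.Ioc α β, h t * (p t : ℂ)) + (∫ t in Set.Ioc α β, h t) * P := by
    simp_rw [mul_add]
    rw [integral_add hint (hh.mul_const _), integral_mul_const]
  have hMα := hM α le_rfl hαβ
  rw [intervalIntegral.integral_of_le hαβ] at hMα ⊢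
  rw [eq_sub_of_add_eq hsplit.symm]
  refine (norm_sub_le _ _).trans ?_
  rw [norm_mul, Complex.norm_real, Real.norm_of_nonneg hP0]
  nlinarith [mul_le_mul_of_nonneg_right hMα hP0]

lemma lemB (g : ℝ → ℝ) (hg : BoundedVariationOn g Set.univ) :
    ∃ C : ℝ, 0 ≤ C ∧ (∀ t, |g t| ≤ C) ∧ Measurable g ∧
      ∀ (h : ℝ → ℂ) (M α β : ℝ), α ≤ β → IntegrableOn h (Set.Ioc α β) →
        (∀ c, α ≤ c → c ≤ β → ‖∫ t in c..β, h t‖ ≤ M) →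
        ‖∫ t in α..β, h t * (g t : ℂ)‖ ≤ C * M := by
  have hl := hg.locallyBoundedVariationOn
  set p := variationOnFromTo g Set.univ 0 with hpdef
  have hp : Monotone p := monotoneOn_univ.1 (variationOnFromTo.monotoneOn hl (Set.mem_univ 0))
  have hq : Monotone (p - g) :=
    monotoneOn_univ.1 (variationOnFromTo.sub_self_monotoneOn hl (Set.mem_univ 0))
  set V := (eVariationOn g Set.univ).toReal
  have hV : 0 ≤ V := ENNReal.toReal_nonneg
  have hpb : ∀ t, |p t| ≤ V := fun t => variationOnFromTo.abs_le_eVariationOn hg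
  have hgb : ∀ t, |g t| ≤ |g 0| + V := by
    intro t
    have := hg.dist_le (Set.mem_univ t) (Set.mem_univ 0)
    rw [Real.dist_eq] at this
    have h2 := abs_add_le (g t - g 0) (g 0)
    simp only [sub_add_cancel] at h2
    linarith
  have hqb : ∀ t, |(p - g) t| ≤ |g 0| + 2 * V := by
    intro t
    have := abs_sub (p t) (g t)
    have := hpb t
    have := hgb t
    simp only [Pi.sub_apply]
    linarith
  have hgm : Measurable g := by
    have := hp.measurable.sub hq.measurable
    simpa using this
  refine ⟨3 * V + 3 * (|g 0| + 2 * V), by positivity, fun t => ?_, hgm, ?_⟩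
  · have := hgb t
    have := abs_nonneg (g 0)
    linarith
  intro h M α β hab hh hM
  have key : ∀ r : ℝ → ℝ, ∀ R : ℝ, Measurable r → (∀ t, |r t| ≤ R) →
      IntervalIntegrable (fun t => h t * (r t : ℂ)) volume α β := by
    intro r R hr hR
    rw [intervalIntegrable_iff_integrableOn_Ioc_of_le hab]
    refine Integrable.mul_bdd (c := R) hh ?_ ?_
    · exact (Complex.measurable_ofReal.comp hr).aestronglyMeasurable
    · refine Eventually.of_forall fun t => ?_
      simpa using hR t
  have e : ∀ t, h t * (g t : ℂ) = h t * (p t : ℂ) - h t * ((p - g) t : ℝ) := by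
    intro t; simp only [Pi.sub_apply]; push_cast; ring
  simp_rw [e]
  rw [intervalIntegral.integral_sub (key _ _ hp.measurable hpb) (key _ _ hq.measurable hqb)]
  refine (norm_sub_le _ _).trans ?_
  have h1 := lemA h p hp V M α β hab hpb hh hM
  have h2 := lemA h _ hq _ M α β hab hqb hh hM
  linarith

lemma lemC (g : ℝ → ℝ) (hg : BoundedVariationOn g Set.univ) (h : ℝ → ℂ)
    (hh : ∀ a b : ℝ, IntervalIntegrable h volume a b)
    (hH : ∃ c : ℂ, Tendsto (fun x : ℝ => ∫ t in (0:ℝ)..x, h t) atTop (nhds c)) :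
    ∃ L : ℂ, Tendsto (fun x : ℝ => ∫ t in (0:ℝ)..x, h t * (g t : ℂ)) atTop (nhds L) := by
  obtain ⟨C, hC0, hgb, hgm, hC⟩ := lemB g hg
  obtain ⟨c, hc⟩ := hH
  have hi : ∀ a b, IntervalIntegrable (fun t => h t * (g t : ℂ)) volume a b := by
    intro a b
    rw [intervalIntegrable_iff]
    refine Integrable.mul_bdd (c := C) (intervalIntegrable_iff.1 (hh a b)) ?_ ?_
    · exact (Complex.measurable_ofReal.comp hgm).aestronglyMeasurable
    · refine Eventually.of_forall fun t => ?_
      simpa using hgb t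
  have hcs := hc.cauchySeq
  apply cauchySeq_tendsto_of_complete
  rw [Metric.cauchySeq_iff] at hcs ⊢
  intro ε hε
  obtain ⟨N, hN⟩ := hcs (ε / (C + 1)) (by positivity)
  have main : ∀ α β, N ≤ α → α ≤ β → ‖∫ t in α..β, h t * (g t : ℂ)‖ < ε := by
    intro α β hα hβ
    refine (hC h (ε / (C + 1)) α β hβ ((intervalIntegrable_iff_integrableOn_Ioc_of_le hβ).1 (hh α β))
      ?_).trans_lt ?_
    · intro c h1 h2
      have := hN β (by linarith) c (by linarith)
      rw [dist_eq_norm, intervalIntegral.integral_interval_sub_left (hh _ _) (hh _ _)] at this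
      exact this.le
    · rw [mul_div_assoc', div_lt_iff₀ (by positivity)]
      nlinarith
  refine ⟨N, fun m hm n hn => ?_⟩
  rcases le_total m n with hmn | hmn
  · rw [dist_comm, dist_eq_norm, intervalIntegral.integral_interval_sub_left (hi _ _) (hi _ _)]
    exact main _ _ hm hmn
  · rw [dist_eq_norm, intervalIntegral.integral_interval_sub_left (hi _ _) (hi _ _)]
    exact main _ _ hn hmn

lemma bvneg (g : ℝ → ℝ) (hg : BoundedVariationOn g Set.univ) :
    BoundedVariationOn (fun t => g (-t)) Set.univ := by
  have := eVariationOn.comp_le_of_antitoneOn g (s := Set.univ) (t := Set.univ) (fun t : ℝ => -t)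
    (fun a _ b _ hab => neg_le_neg hab) (fun _ _ => Set.mem_univ _)
  exact ne_top_of_le_ne_top hg this

set_option maxHeartbeats 1000000 in
/-- Proposition 9: for `f` with convergent indefinite integral at `±∞` and
`g ∈ L¹ ∩ BV`, the improper convolution `f∗g` exists on `ℝ` and
`|∫_a^b f∗g| ≤ ‖f‖_A ‖g‖₁` for all `a ≤ b` (so `‖f∗g‖_A ≤ ‖f‖_A ‖g‖₁`). -/
theorem stmt14 (f : ℝ → ℂ) (g : ℝ → ℝ)
    (hf : ∀ a b : ℝ, IntegrableOn f (Set.Icc a b))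
    (hF₁ : ∃ c : ℂ, Tendsto (fun x : ℝ => ∫ t in (0:ℝ)..x, f t) atTop (nhds c))
    (hF₂ : ∃ c : ℂ, Tendsto (fun x : ℝ => ∫ t in (0:ℝ)..x, f t) atBot (nhds c))
    (hg1 : Integrable g)
    (hgbv : BoundedVariationOn g Set.univ) :
    ∃ fg : ℝ → ℂ,
      (∀ x : ℝ, Tendsto (fun T : ℝ × ℝ =>
          ∫ t in (-T.1)..T.2, f (x - t) * ((g t : ℝ) : ℂ))
        (atTop ×ˢ atTop) (nhds (fg x))) ∧
      ∀ a b : ℝ, a ≤ b →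
        ‖∫ x in a..b, fg x‖ ≤
          sSup {r : ℝ | ∃ c d : ℝ, c ≤ d ∧ r = ‖∫ t in c..d, f t‖} * ∫ t : ℝ, |g t| := by
  classical
  have hfi : ∀ a b : ℝ, IntervalIntegrable f volume a b := by
    intro a b
    rw [intervalIntegrable_iff]
    exact (hf (min a b) (max a b)).mono_set Set.Ioc_subset_Icc_self
  obtain ⟨C, hC0, hgb, hgm, hC⟩ := lemB g hgbv
  have hfx : ∀ x a b : ℝ, IntervalIntegrable (fun t => f (x - t)) volume a b := by
    intro x a b
    simpa using (hfi (x - a) (x - b)).comp_sub_left x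
  have hfx' : ∀ x a b : ℝ, IntervalIntegrable (fun t => f (x + t)) volume a b := by
    intro x a b
    simpa using (hfi (x + a) (x + b)).comp_add_left x
  have hi : ∀ x a b, IntervalIntegrable (fun t => f (x - t) * (g t : ℂ)) volume a b := by
    intro x a b
    rw [intervalIntegrable_iff]
    refine Integrable.mul_bdd (c := C) (intervalIntegrable_iff.1 (hfx x a b)) ?_ ?_
    · exact (Complex.measurable_ofReal.comp hgm).aestronglyMeasurable
    · refine Eventually.of_forall fun t => ?_
      simpa using hgb t
  -- boundedness of the Alexiewicz set
  set A := {r : ℝ | ∃ c d : ℝ, c ≤ d ∧ r = ‖∫ t in c..d, f t‖} with hA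
  have hbdd : BddAbove A := by
    obtain ⟨c₁, hc₁⟩ := hF₁
    obtain ⟨c₂, hc₂⟩ := hF₂
    obtain ⟨B, hB⟩ : ∃ B, ∀ x : ℝ, ‖∫ t in (0:ℝ)..x, f t‖ ≤ B := by
      have h1 := hc₁.norm.eventually (gt_mem_nhds (lt_add_one ‖c₁‖))
      have h2 := hc₂.norm.eventually (gt_mem_nhds (lt_add_one ‖c₂‖))
      obtain ⟨N₁, h1⟩ := eventually_atTop.1 h1
      obtain ⟨N₂, h2⟩ := eventually_atBot.1 h2
      obtain ⟨K, hK⟩ := isCompact_Icc.exists_bound_of_continuousOn (s := Set.Icc N₂ N₁)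
        (intervalIntegral.continuous_primitive hfi 0).continuousOn
      refine ⟨max K (max (‖c₁‖ + 1) (‖c₂‖ + 1)), fun x => ?_⟩
      by_cases hx1 : N₁ ≤ x
      · exact (h1 x hx1).le.trans (by simp)
      by_cases hx2 : x ≤ N₂
      · exact (h2 x hx2).le.trans (by simp)
      push Not at hx1 hx2
      exact (hK x ⟨hx2.le, hx1.le⟩).trans (by simp)
    refine ⟨B + B, ?_⟩
    rintro r ⟨c, d, hcd, rfl⟩
    rw [← intervalIntegral.integral_interval_sub_left (hfi 0 d) (hfi 0 c)]
    exact (norm_sub_le _ _).trans (add_le_add (hB _) (hB _))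
  have hsup : ∀ c d : ℝ, c ≤ d → ‖∫ t in c..d, f t‖ ≤ sSup A := fun c d hcd =>
    le_csSup hbdd ⟨c, d, hcd, rfl⟩
  have hex : ∀ x : ℝ, ∃ L : ℂ, Tendsto (fun T : ℝ × ℝ =>
          ∫ t in (-T.1)..T.2, f (x - t) * ((g t : ℝ) : ℂ))
        (atTop ×ˢ atTop) (nhds L) := by
    intro x
    obtain ⟨L₁, hL₁⟩ := lemC g hgbv (fun t => f (x - t)) (hfx x) (by
      obtain ⟨c, hc⟩ := hF₂
      refine ⟨(∫ t in (0:ℝ)..x, f t) - c, ?_⟩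
      have : Tendsto (fun T : ℝ => x - T) atTop atBot :=
        tendsto_atBot_add_const_left _ x tendsto_neg_atTop_atBot
      refine ((tendsto_const_nhds (x := ∫ t in (0:ℝ)..x, f t)).sub (hc.comp this)).congr fun T => ?_
      rw [intervalIntegral.integral_comp_sub_left, sub_zero]
      exact intervalIntegral.integral_interval_sub_left (hfi _ _) (hfi _ _))
    obtain ⟨L₂, hL₂⟩ := lemC (fun t => g (-t)) (bvneg g hgbv) (fun t => f (x + t)) (hfx' x) (by
      obtain ⟨c, hc⟩ := hF₁
      refine ⟨c - (∫ t in (0:ℝ)..x, f t), ?_⟩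
      have : Tendsto (fun T : ℝ => x + T) atTop atTop :=
        tendsto_atTop_add_const_left _ x tendsto_id
      refine ((hc.comp this).sub (tendsto_const_nhds (x := ∫ t in (0:ℝ)..x, f t))).congr fun T => ?_
      rw [intervalIntegral.integral_comp_add_left, add_zero]
      exact intervalIntegral.integral_interval_sub_left (hfi _ _) (hfi _ _))
    refine ⟨L₂ + L₁, ?_⟩
    refine ((hL₂.comp tendsto_fst).add (hL₁.comp tendsto_snd)).congr fun T => ?_
    have h3 := intervalIntegral.integral_comp_neg (a := 0) (b := T.1)
      (fun t => f (x - t) * ((g t : ℝ) : ℂ))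
    simp only [sub_neg_eq_add, neg_zero] at h3
    simp only [Function.comp]
    rw [h3]
    exact intervalIntegral.integral_add_adjacent_intervals (hi _ _ _) (hi _ _ _)
  choose fg hfg using hex
  refine ⟨fg, hfg, fun a b hab => ?_⟩
  -- truncated integrability
  have hprod : ∀ n : ℕ, Integrable (fun q : ℝ × ℝ => f (q.1 - q.2) * ((g q.2 : ℝ) : ℂ))
      ((volume.restrict (Set.Ioc a b)).prod (volume.restrict (Set.Ioc (-(n:ℝ)) n))) := by
    intro n
    have h1 : Integrable ((Set.Icc (a - n) (b + n)).indicator f) :=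
      (integrable_indicator_iff measurableSet_Icc).2 (hf _ _)
    have h2 : Integrable (fun t => ((g t : ℝ) : ℂ)) := hg1.ofReal
    have h3 := Integrable.convolution_integrand (ContinuousLinearMap.mul ℝ ℂ) h2 h1
    rw [Measure.prod_restrict]
    refine (h3.integrableOn (s := Set.Ioc a b ×ˢ Set.Ioc (-(n:ℝ)) n)).congr ?_
    filter_upwards [ae_restrict_mem (measurableSet_Ioc.prod measurableSet_Ioc)] with q hq
    have hm : q.1 - q.2 ∈ Set.Icc (a - n) (b + n) := by
      obtain ⟨⟨h1, h2⟩, h3, h4⟩ := hq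
      constructor <;> linarith
    simp [Set.indicator_of_mem hm, mul_comm]
  have hnn : ∀ n : ℕ, -(n:ℝ) ≤ n := fun n => by
    have : (0:ℝ) ≤ n := Nat.cast_nonneg n
    linarith
  have hlim : Tendsto (fun n : ℕ => ∫ x in a..b, ∫ t in (-(n:ℝ))..n, f (x - t) * ((g t : ℝ) : ℂ))
      atTop (nhds (∫ x in a..b, fg x)) := by
    apply intervalIntegral.tendsto_integral_filter_of_dominated_convergence (fun _ => C * sSup A)
    · refine Eventually.of_forall fun n => ?_
      rw [Set.uIoc_of_le hab]
      simp_rw [intervalIntegral.integral_of_le (hnn n)]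
      exact (hprod n).integral_prod_left.aestronglyMeasurable
    · refine Eventually.of_forall fun n => Eventually.of_forall fun x _ => ?_
      refine hC (fun t => f (x - t)) (sSup A) _ _ (hnn n)
        ((intervalIntegrable_iff_integrableOn_Ioc_of_le (hnn n)).1 (hfx x _ _)) ?_
      intro c _ h2
      rw [intervalIntegral.integral_comp_sub_left]
      exact hsup _ _ (by linarith)
    · exact intervalIntegrable_const
    · refine Eventually.of_forall fun x _ => ?_
      have ht : Tendsto (fun n : ℕ => ((n:ℝ), (n:ℝ))) atTop (atTop ×ˢ atTop) :=
        tendsto_natCast_atTop_atTop.prodMk tendsto_natCast_atTop_atTop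
      exact (hfg x).comp ht
  refine le_of_tendsto hlim.norm (Eventually.of_forall fun n => ?_)
  rw [intervalIntegral.integral_of_le hab]
  simp_rw [intervalIntegral.integral_of_le (hnn n)]
  rw [integral_integral_swap (hprod n)]
  have hS0 : 0 ≤ sSup A := (norm_nonneg _).trans (hsup 0 0 le_rfl)
  have hb : ∀ t, ‖∫ x in Set.Ioc a b, f (x - t) * ((g t : ℝ) : ℂ)‖ ≤ sSup A * |g t| := by
    intro t
    rw [integral_mul_const, norm_mul, Complex.norm_real, Real.norm_eq_abs,
      ← intervalIntegral.integral_of_le hab, intervalIntegral.integral_comp_sub_right]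
    exact mul_le_mul_of_nonneg_right (hsup _ _ (by linarith)) (abs_nonneg _)
  have hgi : Integrable (fun t => sSup A * |g t|) := hg1.abs.const_mul _
  refine (norm_integral_le_of_norm_le hgi.integrableOn (Eventually.of_forall hb)).trans ?_
  refine (setIntegral_le_integral hgi (Eventually.of_forall fun t => by positivity)).trans ?_
  rw [integral_const_mul]
end
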